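/- arXiv:1604.00416 — 4 statements merged into one kernel-verified Lean document; each statement's English description precedes it below -/
import Mathlib

section
/- Phragmén–Lindelöf Laplace transform lemma (Lemma 3.1): Let f : [0,∞) → ℂ be locally integrable and suppose there exist C > 0 and y₀ ∈ ℝ such that |f(t)| ≤ C·e^{y₀ t} for a.e. t ≥ 0 (so that ∫₀^∞ e^{izt} f(t) dt converges absolutely whenever Im z > y₀). Let β > 0 and θ ∈ (0, π/2), and suppose that there exist C', R > 0 such that |∫₀^∞ e^{i z t} f(t) dt| ≤ C'·e^{−β·Im z} for all z = r·e^{iθ} with r ≥ R (and r·sin θ > y₀). Then f(t) = 0 for almost every t ∈ [0,β]. -/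
open MeasureTheory Set

/-!
Translate `f` by `β` and cut it at the origin into a left part `g`, supported in `[-β, 0]`, and a
right part. The transform of the right part is bounded for large `Im z` and the translated transform
is bounded along the ray by hypothesis, so the transform `G` of `g` is bounded along the ray. Since
`g` has compact support, `G` is entire of exponential type, and since it lives on the negative
half-line, `G` is bounded in the lower half-plane. The ray divides the upper half-plane into two
sectors of opening less than `π`, where the Phragmén–Lindelöf principle shows that `G` is bounded;
by Liouville's theorem `G` is constant. The constant is zero by the Riemann–Lebesgue lemma, and
`g = 0` by uniqueness of the Fourier transform.
-/

section

open Filter Topology Asymptotics FourierTransform SchwartzMap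
open Complex (I)
open scoped ContDiff Real

theorem exists_forall_norm_le_of_isBigO_atTop_one {X : Type*} [SeminormedAddCommGroup X]
    {u : ℝ → X} (hu : Continuous u) (h : u =O[atTop] (1 : ℝ → ℝ)) (a : ℝ) :
    ∃ K, ∀ r, a ≤ r → ‖u r‖ ≤ K := by
  obtain ⟨K₁, hK₁⟩ := h.bound
  obtain ⟨R, hR⟩ := eventually_atTop.1 hK₁
  obtain ⟨K₂, hK₂⟩ := (isCompact_Icc (a := a) (b := R)).exists_bound_of_continuousOn hu.continuousOn
  refine ⟨max K₁ K₂, fun r hr ↦ ?_⟩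
  obtain hrR | hrR := le_total R r
  · exact le_max_of_le_left (by simpa using hR r hrR)
  · exact le_max_of_le_right (hK₂ r ⟨hr, hrR⟩)

variable {E : Type*} [NormedAddCommGroup E] [NormedSpace ℂ E]

section FourierUniqueness

variable {V : Type*} [NormedAddCommGroup V] [InnerProductSpace ℝ V] [FiniteDimensional ℝ V]
  [MeasurableSpace V] [BorelSpace V]

theorem integral_schwartz_smul_eq_zero_of_fourier_eq_zero [CompleteSpace E] {g : V → E}
    (hg : Integrable g) (h : 𝓕 g = 0) (Φ : 𝓢(V, ℂ)) : ∫ v, Φ v • g v = 0 := by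
  let Ψ : 𝓢(V, ℂ) := 𝓕⁻ Φ
  have hΨ : 𝓕 (Ψ : V → ℂ) = Φ := by
    rw [← SchwartzMap.fourier_coe, FourierTransform.fourier_fourierInv_eq]
  calc ∫ v, Φ v • g v = ∫ v, 𝓕 (Ψ : V → ℂ) v • g v := by rw [hΨ]
    _ = ∫ w, Ψ w • 𝓕 g w := by
      simpa using! VectorFourier.integral_fourierIntegral_smul_eq_flip (L := innerₗ V)
        Real.continuous_fourierChar continuous_inner Ψ.integrable hg
    _ = 0 := by simp [h]

theorem ae_eq_zero_of_fourier_eq_zero [CompleteSpace E] {g : V → E} (hg : Integrable g)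
    (h : 𝓕 g = 0) : g =ᵐ[volume] 0 := by
  refine ae_eq_zero_of_integral_contDiff_smul_eq_zero hg.locallyIntegrable fun φ hφ hφc ↦ ?_
  have hsupp : HasCompactSupport (Complex.ofRealCLM ∘ φ) := hφc.comp_left rfl
  exact integral_schwartz_smul_eq_zero_of_fourier_eq_zero hg h
    (hsupp.toSchwartzMap (by fun_prop))

end FourierUniqueness

section PhragmenLindelof

variable {F : ℂ → E} {a b c B K θ : ℝ}

theorem norm_le_of_norm_le_on_rays (hF : Differentiable ℂ F)
    (hord : F =O[⊤] fun z ↦ Real.exp (B * ‖z‖ ^ c)) (hc₀ : 0 ≤ c) (hc : c < π / (b - a))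
    (ha : ∀ r : ℝ, 0 < r → ‖F (r * Complex.exp (a * I))‖ ≤ K)
    (hb : ∀ r : ℝ, 0 < r → ‖F (r * Complex.exp (b * I))‖ ≤ K)
    {z : ℂ} (hz : z ≠ 0) (hza : a ≤ z.arg) (hzb : z.arg ≤ b) : ‖F z‖ ≤ K := by
  have exp_polar (w : ℂ) : Complex.exp w = Real.exp w.re * Complex.exp (w.im * I) := by
    rw [Complex.ofReal_exp, ← Complex.exp_add, Complex.re_add_im]
  have hgrowth : (fun w ↦ F (Complex.exp w)) =O[⊤]
      fun w ↦ Real.exp (|B| * Real.exp (c * |w.re|)) := by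
    refine (hord.comp_tendsto tendsto_top).trans (.of_norm_le fun w ↦ ?_)
    rw [Function.comp_apply, Real.norm_eq_abs, Real.abs_exp, Complex.norm_exp, ← Real.exp_mul,
      mul_comm w.re]
    gcongr <;> exact le_abs_self _
  rw [← Complex.log_im] at hza hzb
  rw [← Complex.exp_log hz]
  exact PhragmenLindelof.horizontal_strip (f := fun w ↦ F (Complex.exp w))
    (hF.comp Complex.differentiable_exp).diffContOnCl ⟨c, hc, |B|, hgrowth.mono le_top⟩
    (fun w hw ↦ by rw [exp_polar, hw]; exact ha _ (Real.exp_pos _))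
    (fun w hw ↦ by rw [exp_polar, hw]; exact hb _ (Real.exp_pos _)) hza hzb

theorem norm_le_of_norm_le_lowerHalfPlane_of_norm_le_ray (hF : Differentiable ℂ F)
    (hord : F =O[⊤] fun z ↦ Real.exp (B * ‖z‖)) (hθ : θ ∈ Ioo 0 π)
    (hlow : ∀ z : ℂ, z.im ≤ 0 → ‖F z‖ ≤ K)
    (hray : ∀ r : ℝ, 0 < r → ‖F (r * Complex.exp (θ * I))‖ ≤ K) (z : ℂ) : ‖F z‖ ≤ K := by
  obtain hz | hz := le_or_gt z.im 0
  · exact hlow z hz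
  have hz₀ : z ≠ 0 := by rintro rfl; simp at hz
  have hord' : F =O[⊤] fun z ↦ Real.exp (B * ‖z‖ ^ (1 : ℝ)) := by simpa using hord
  obtain h | h := le_total z.arg θ
  · refine norm_le_of_norm_le_on_rays hF hord' zero_le_one ?_ (fun r _ ↦ hlow _ (by simp)) hray
      hz₀ (Complex.arg_nonneg_iff.2 hz.le) h
    rw [sub_zero, one_lt_div hθ.1]
    exact hθ.2
  · refine norm_le_of_norm_le_on_rays hF hord' zero_le_one ?_ hray (fun r _ ↦ hlow _ (by simp))
      hz₀ h (Complex.arg_le_pi z)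
    rw [one_lt_div (sub_pos.2 hθ.2)]
    linarith [hθ.1]

theorem exists_eq_const_of_bounded_lowerHalfPlane_of_bounded_ray (hF : Differentiable ℂ F)
    (hord : F =O[⊤] fun z ↦ Real.exp (B * ‖z‖)) (hθ : θ ∈ Ioo 0 π)
    (hlow : ∀ z : ℂ, z.im ≤ 0 → ‖F z‖ ≤ K)
    (hray : (fun r : ℝ ↦ F (r * Complex.exp (θ * I))) =O[atTop] (1 : ℝ → ℝ)) :
    ∃ c, ∀ z, F z = c := by
  obtain ⟨K', hK'⟩ := exists_forall_norm_le_of_isBigO_atTop_one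
    (hF.continuous.comp (by fun_prop)) hray 0
  refine hF.exists_const_forall_eq_of_bounded
    (isBounded_iff_forall_norm_le.2 ⟨max K K', forall_mem_range.2 fun z ↦ ?_⟩)
  exact norm_le_of_norm_le_lowerHalfPlane_of_norm_le_ray hF hord hθ
    (fun w hw ↦ le_max_of_le_left (hlow w hw)) (fun r hr ↦ le_max_of_le_right (hK' r hr.le)) z

end PhragmenLindelof

/-- Absolute convergence at `z` of the integral defining `fourierLaplace f μ`. -/
def FourierLaplaceConvergent (f : ℝ → E) (μ : Measure ℝ) (z : ℂ) : Prop :=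
  Integrable (fun t : ℝ ↦ Complex.exp (I * z * t) • f t) μ

/-- The Fourier–Laplace transform `z ↦ ∫ e^{izt} f(t) dμ(t)`. Taking `μ` to be the restriction of
Lebesgue measure to `Ioi 0`, this is the Laplace transform of `f` at `-iz`. -/
noncomputable def fourierLaplace (f : ℝ → E) (μ : Measure ℝ) (z : ℂ) : E :=
  ∫ t, Complex.exp (I * z * t) • f t ∂μ

variable {f : ℝ → E} {μ ν : Measure ℝ} {z z₀ : ℂ} {b c θ β M : ℝ} {s : Set ℝ}

theorem fourierLaplaceConvergent_zero_iff : FourierLaplaceConvergent f μ 0 ↔ Integrable f μ := by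
  simp [FourierLaplaceConvergent]

theorem norm_exp_I_mul_smul (z : ℂ) (t : ℝ) (x : E) :
    ‖Complex.exp (I * z * t) • x‖ = Real.exp (-(z.im * t)) * ‖x‖ := by
  simp [norm_smul, Complex.norm_exp]

theorem norm_exp_smul_le {t : ℝ} (x : E) (h : (z₀.im - z.im) * t ≤ M) :
    ‖Complex.exp (I * z * t) • x‖ ≤ Real.exp M * ‖Complex.exp (I * z₀ * t) • x‖ := by
  rw [norm_exp_I_mul_smul, norm_exp_I_mul_smul, ← mul_assoc, ← Real.exp_add]
  gcongr
  linarith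

namespace FourierLaplaceConvergent

theorem aestronglyMeasurable (hf : FourierLaplaceConvergent f μ z₀) :
    AEStronglyMeasurable f μ := by
  have hexp : Continuous fun t : ℝ ↦ Complex.exp (-(I * z₀ * t)) := by fun_prop
  refine (hexp.aestronglyMeasurable.smul (Integrable.aestronglyMeasurable hf)).congr (.of_forall ?_)
  intro t
  simp [smul_smul, ← Complex.exp_add]

theorem of_sub_im_mul_le (hf : FourierLaplaceConvergent f μ z₀)
    (h : ∀ᵐ t ∂μ, (z₀.im - z.im) * t ≤ M) : FourierLaplaceConvergent f μ z := by
  have hexp : Continuous fun t : ℝ ↦ Complex.exp (I * z * t) := by fun_prop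
  exact Integrable.mono' (hf.norm.const_mul (Real.exp M))
    (hexp.aestronglyMeasurable.smul hf.aestronglyMeasurable)
    (h.mono fun t ↦ norm_exp_smul_le (f t))

theorem norm_fourierLaplace_le (hf : FourierLaplaceConvergent f μ z₀)
    (h : ∀ᵐ t ∂μ, (z₀.im - z.im) * t ≤ M) :
    ‖fourierLaplace f μ z‖ ≤ Real.exp M * ∫ t, ‖Complex.exp (I * z₀ * t) • f t‖ ∂μ := by
  rw [← integral_const_mul]
  exact norm_integral_le_of_norm_le (hf.norm.const_mul _) (h.mono fun t ↦ norm_exp_smul_le (f t))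

theorem of_im_le (hf : FourierLaplaceConvergent f μ z₀) (hb : ∀ᵐ t ∂μ, b ≤ t)
    (hz : z₀.im ≤ z.im) : FourierLaplaceConvergent f μ z :=
  hf.of_sub_im_mul_le (hb.mono fun _ ht ↦ mul_le_mul_of_nonpos_left ht (sub_nonpos.2 hz))

theorem of_norm_le_exp {C y : ℝ} (hf : AEStronglyMeasurable f (volume.restrict (Ioi c)))
    (hbd : ∀ᵐ t ∂volume.restrict (Ioi c), ‖f t‖ ≤ C * Real.exp (y * t)) (hz : y < z.im) :
    FourierLaplaceConvergent f (volume.restrict (Ioi c)) z := by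
  have hexp : Continuous fun t : ℝ ↦ Complex.exp (I * z * t) := by fun_prop
  refine Integrable.mono' ((integrableOn_exp_mul_Ioi (sub_neg.2 hz) c).const_mul C)
    (hexp.aestronglyMeasurable.smul hf) (hbd.mono fun t ht ↦ ?_)
  calc ‖Complex.exp (I * z * t) • f t‖
      = Real.exp (-(z.im * t)) * ‖f t‖ := norm_exp_I_mul_smul z t (f t)
    _ ≤ Real.exp (-(z.im * t)) * (C * Real.exp (y * t)) := by gcongr
    _ = C * Real.exp ((y - z.im) * t) := by
      rw [mul_left_comm, ← Real.exp_add]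
      ring_nf

end FourierLaplaceConvergent

theorem norm_fourierLaplace_le_of_im_nonpos (hf : Integrable f μ) (hμ : ∀ᵐ t ∂μ, t ≤ 0)
    (hz : z.im ≤ 0) : ‖fourierLaplace f μ z‖ ≤ ∫ t, ‖f t‖ ∂μ := by
  simpa using (fourierLaplaceConvergent_zero_iff.2 hf).norm_fourierLaplace_le (M := 0)
    (hμ.mono fun _ ht ↦ mul_nonpos_of_nonneg_of_nonpos (by simpa using hz) ht)

theorem norm_fourierLaplace_le_of_im_le (hf : FourierLaplaceConvergent f μ z₀)
    (hμ : ∀ᵐ t ∂μ, 0 ≤ t) (hz : z₀.im ≤ z.im) :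
    ‖fourierLaplace f μ z‖ ≤ ∫ t, ‖Complex.exp (I * z₀ * t) • f t‖ ∂μ := by
  simpa using hf.norm_fourierLaplace_le (M := 0)
    (hμ.mono fun _ ht ↦ mul_nonpos_of_nonpos_of_nonneg (sub_nonpos.2 hz) ht)

theorem fourierLaplace_inter_add_sdiff {t : Set ℝ} (ht : MeasurableSet t)
    (hf : FourierLaplaceConvergent f (μ.restrict s) z) :
    fourierLaplace f (μ.restrict (s ∩ t)) z + fourierLaplace f (μ.restrict (s \ t)) z =
      fourierLaplace f (μ.restrict s) z :=
  integral_inter_add_sdiff ht hf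

section Ray

theorem im_ofReal_mul_exp_mul_I (r θ : ℝ) :
    (r * Complex.exp (θ * I)).im = r * Real.sin θ := by
  simp [Complex.exp_ofReal_mul_I_im]

theorem tendsto_im_ray_atTop (hθ : θ ∈ Ioo 0 π) :
    Tendsto (fun r : ℝ ↦ (r * Complex.exp (θ * I)).im) atTop atTop := by
  simp only [im_ofReal_mul_exp_mul_I]
  exact tendsto_id.atTop_mul_const (Real.sin_pos_of_mem_Ioo hθ)

theorem isBigO_one_fourierLaplace_ray_of_ae_nonneg (hf : FourierLaplaceConvergent f μ z₀)
    (hμ : ∀ᵐ t ∂μ, 0 ≤ t) (hθ : θ ∈ Ioo 0 π) :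
    (fun r : ℝ ↦ fourierLaplace f μ (r * Complex.exp (θ * I))) =O[atTop] (1 : ℝ → ℝ) := by
  refine .of_bound (∫ t, ‖Complex.exp (I * z₀ * t) • f t‖ ∂μ) ?_
  filter_upwards [(tendsto_im_ray_atTop hθ).eventually_ge_atTop z₀.im] with r hr
  simpa using norm_fourierLaplace_le_of_im_le hf hμ hr

end Ray

section Translation

theorem exp_smul_comp_add_right (f : ℝ → E) (z : ℂ) (c t : ℝ) :
    Complex.exp (I * z * t) • f (t + c) =
      Complex.exp (-(I * z * c)) • Complex.exp (I * z * ↑(t + c)) • f (t + c) := by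
  rw [smul_smul, ← Complex.exp_add]
  push_cast
  ring_nf

theorem FourierLaplaceConvergent.comp_add_right (hf : FourierLaplaceConvergent f ν z)
    (hc : MeasurePreserving (· + c) μ ν) :
    FourierLaplaceConvergent (fun t ↦ f (t + c)) μ z := by
  simp only [FourierLaplaceConvergent, exp_smul_comp_add_right f]
  exact (hc.integrable_comp_of_integrable hf).smul (Complex.exp (-(I * z * c)))

theorem fourierLaplace_comp_add_right (f : ℝ → E) (z : ℂ) (hc : MeasurePreserving (· + c) μ ν) :
    fourierLaplace (fun t ↦ f (t + c)) μ z =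
      Complex.exp (-(I * z * c)) • fourierLaplace f ν z := by
  simp only [fourierLaplace, exp_smul_comp_add_right f, integral_smul]
  rw [hc.integral_comp (measurableEmbedding_addRight c)
    fun t : ℝ ↦ Complex.exp (I * z * t) • f t]

end Translation

section BoundedSupport

theorem sub_im_mul_le_of_abs_le {t : ℝ} (ht : |t| ≤ b) (z₀ z : ℂ) :
    (z₀.im - z.im) * t ≤ b * ‖z₀ - z‖ := by
  calc (z₀.im - z.im) * t ≤ |(z₀ - z).im| * |t| := by
        rw [← abs_mul, Complex.sub_im]
        exact le_abs_self _
    _ ≤ ‖z₀ - z‖ * b := by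
        gcongr
        exact Complex.abs_im_le_norm _
    _ = b * ‖z₀ - z‖ := mul_comm _ _

theorem exists_ae_restrict_abs_le_of_isBounded (hs : MeasurableSet s) (hb : Bornology.IsBounded s) :
    ∃ b, ∀ᵐ t ∂μ.restrict s, |t| ≤ b :=
  hb.exists_norm_le.imp fun _ h ↦ (ae_restrict_mem hs).mono h

theorem FourierLaplaceConvergent.of_abs_le (hf : FourierLaplaceConvergent f μ z₀)
    (hb : ∀ᵐ t ∂μ, |t| ≤ b) (z : ℂ) : FourierLaplaceConvergent f μ z :=
  hf.of_sub_im_mul_le (hb.mono fun _ ht ↦ sub_im_mul_le_of_abs_le ht z₀ z)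

theorem isBigO_fourierLaplace_exp_norm (hf : Integrable f μ) (hb : ∀ᵐ t ∂μ, |t| ≤ b) :
    fourierLaplace f μ =O[⊤] fun z ↦ Real.exp (b * ‖z‖) := by
  refine .of_bound (∫ t, ‖f t‖ ∂μ) (.of_forall fun z ↦ ?_)
  simpa [mul_comm] using (fourierLaplaceConvergent_zero_iff.2 hf).norm_fourierLaplace_le
    (hb.mono fun _ ht ↦ sub_im_mul_le_of_abs_le ht 0 z)

theorem hasDerivAt_exp_I_mul_smul (t : ℝ) (x : E) (z : ℂ) :
    HasDerivAt (fun z ↦ Complex.exp (I * z * t) • x) ((I * t) • Complex.exp (I * z * t) • x) z := by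
  have hlin : HasDerivAt (fun z : ℂ ↦ I * z * t) (I * t) z := by
    simpa using ((hasDerivAt_id z).const_mul I).mul_const (t : ℂ)
  simpa only [smul_smul, mul_comm] using hlin.cexp.smul_const x

theorem differentiable_fourierLaplace (hf : Integrable f μ) (hb : ∀ᵐ t ∂μ, |t| ≤ b) :
    Differentiable ℂ (fourierLaplace f μ) := by
  intro z
  have hconv := (fourierLaplaceConvergent_zero_iff.2 hf).of_abs_le hb
  have hlin : Continuous fun t : ℝ ↦ I * (t : ℂ) := by fun_prop
  have hderiv_le : ∀ᵐ t : ℝ ∂μ, ∀ w ∈ Metric.ball z 1,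
      ‖(I * t) • Complex.exp (I * w * t) • f t‖ ≤
        b * (Real.exp b * ‖Complex.exp (I * z * t) • f t‖) := by
    filter_upwards [hb] with t ht w hw
    have hb₀ : 0 ≤ b := (abs_nonneg t).trans ht
    have hzw : ‖z - w‖ ≤ 1 := (mem_ball_iff_norm'.1 hw).le
    rw [norm_smul]
    gcongr
    · simpa using ht
    · exact norm_exp_smul_le (f t) ((sub_im_mul_le_of_abs_le ht z w).trans
        (mul_le_of_le_one_right hb₀ hzw))
  exact (hasDerivAt_integral_of_dominated_loc_of_deriv_le (Metric.ball_mem_nhds z one_pos)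
    (.of_forall fun w ↦ (hconv w).1) (hconv z) (hlin.aestronglyMeasurable.smul (hconv z).1)
    hderiv_le (((hconv z).norm.const_mul _).const_mul _)
    (.of_forall fun t w _ ↦ hasDerivAt_exp_I_mul_smul t (f t) w)).2.differentiableAt

end BoundedSupport

section Uniqueness

theorem fourier_indicator_eq_fourierLaplace (f : ℝ → E) (hs : MeasurableSet s) (x : ℝ) :
    𝓕 (s.indicator f) x = fourierLaplace f (volume.restrict s) ↑(-2 * π * x) := by
  rw [Real.fourier_real_eq_integral_exp_smul, fourierLaplace, ← integral_indicator hs]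
  congr with t
  rw [indicator_smul_apply]
  by_cases ht : t ∈ s <;> simp [ht]; ring_nf

variable [CompleteSpace E]

theorem ae_eq_zero_of_fourierLaplace_eq_const (hs : MeasurableSet s) (hf : IntegrableOn f s) {c : E}
    (h : ∀ x : ℝ, fourierLaplace f (volume.restrict s) x = c) :
    ∀ᵐ t ∂volume.restrict s, f t = 0 := by
  have hfourier (x : ℝ) : 𝓕 (s.indicator f) x = c := by
    rw [fourier_indicator_eq_fourierLaplace f hs, h]
  have hc : c = 0 := tendsto_nhds_unique tendsto_const_nhds
    ((Real.zero_at_infty_fourier (s.indicator f)).congr hfourier)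
  have hzero : s.indicator f =ᵐ[volume] 0 :=
    ae_eq_zero_of_fourier_eq_zero (hf.integrable_indicator hs)
      (funext fun x ↦ (hfourier x).trans hc)
  exact (indicator_ae_eq_restrict hs).symm.trans (ae_restrict_of_ae hzero)

theorem ae_eq_zero_of_isBigO_one_fourierLaplace_ray_of_isBounded (hs : MeasurableSet s)
    (hb : Bornology.IsBounded s) (hs₀ : s ⊆ Iic 0) (hf : IntegrableOn f s) (hθ : θ ∈ Ioo 0 π)
    (hray : (fun r : ℝ ↦ fourierLaplace f (volume.restrict s) (r * Complex.exp (θ * I)))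
      =O[atTop] (1 : ℝ → ℝ)) :
    ∀ᵐ t ∂volume.restrict s, f t = 0 := by
  obtain ⟨b, hb⟩ := exists_ae_restrict_abs_le_of_isBounded hs hb
  obtain ⟨c, hc⟩ := exists_eq_const_of_bounded_lowerHalfPlane_of_bounded_ray
    (differentiable_fourierLaplace hf hb) (isBigO_fourierLaplace_exp_norm hf hb) hθ
    (fun _ ↦ norm_fourierLaplace_le_of_im_nonpos hf ((ae_restrict_mem hs).mono hs₀)) hray
  exact ae_eq_zero_of_fourierLaplace_eq_const hs hf fun x ↦ hc x

theorem ae_eq_zero_of_isBigO_one_fourierLaplace_ray (hs : MeasurableSet s) (hsb : BddBelow s)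
    (hf : FourierLaplaceConvergent f (volume.restrict s) z₀) (hθ : θ ∈ Ioo 0 π)
    (hray : (fun r : ℝ ↦ fourierLaplace f (volume.restrict s) (r * Complex.exp (θ * I)))
      =O[atTop] (1 : ℝ → ℝ)) :
    ∀ᵐ t ∂volume.restrict (s ∩ Iic 0), f t = 0 := by
  obtain ⟨b, hb⟩ := hsb
  have hleft : MeasurableSet (s ∩ Iic 0) := hs.inter measurableSet_Iic
  have hleft_bdd : Bornology.IsBounded (s ∩ Iic 0) :=
    (Metric.isBounded_Icc b 0).subset fun _ ht ↦ ⟨hb ht.1, ht.2⟩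
  have hleft_int : IntegrableOn f (s ∩ Iic 0) := by
    obtain ⟨M, hM⟩ := exists_ae_restrict_abs_le_of_isBounded hleft hleft_bdd
    have hconv : FourierLaplaceConvergent f (volume.restrict (s ∩ Iic 0)) z₀ :=
      IntegrableOn.mono_set hf inter_subset_left
    exact fourierLaplaceConvergent_zero_iff.1 (hconv.of_abs_le hM 0)
  have hright : (fun r : ℝ ↦ fourierLaplace f (volume.restrict (s \ Iic 0))
      (r * Complex.exp (θ * I))) =O[atTop] (1 : ℝ → ℝ) :=
    isBigO_one_fourierLaplace_ray_of_ae_nonneg (IntegrableOn.mono_set hf sdiff_subset)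
      ((ae_restrict_mem (hs.diff measurableSet_Iic)).mono fun _ ht ↦ (not_le.1 ht.2).le) hθ
  refine ae_eq_zero_of_isBigO_one_fourierLaplace_ray_of_isBounded hleft hleft_bdd
    inter_subset_right hleft_int hθ ((hray.sub hright).congr' ?_ .rfl)
  filter_upwards [(tendsto_im_ray_atTop hθ).eventually_ge_atTop z₀.im] with r hr
  exact sub_eq_of_eq_add (fourierLaplace_inter_add_sdiff measurableSet_Iic
    (hf.of_im_le ((ae_restrict_mem hs).mono hb) hr)).symm

theorem laplace_phragmen_lindelof_general
    (hf : FourierLaplaceConvergent f (volume.restrict (Ioi 0)) z₀) (hθ : θ ∈ Ioo 0 π)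
    (hray : (fun r : ℝ ↦ fourierLaplace f (volume.restrict (Ioi 0)) (r * Complex.exp (θ * I)))
      =O[atTop] fun r ↦ Real.exp (-β * (r * Real.sin θ))) :
    ∀ᵐ t ∂volume.restrict (Icc 0 β), f t = 0 := by
  have hshift (s : Set ℝ) : MeasurePreserving (· + β)
      (volume.restrict ((· + β) ⁻¹' s)) (volume.restrict s) :=
    (measurePreserving_add_right volume β).restrict_preimage_emb (measurableEmbedding_addRight β) s
  have hfactor : (fun r : ℝ ↦ Complex.exp (-(I * (r * Complex.exp (θ * I)) * β)))
      =O[atTop] fun r ↦ Real.exp (β * (r * Real.sin θ)) :=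
    .of_norm_le fun r ↦ by
      rw [← im_ofReal_mul_exp_mul_I]
      simp [Complex.norm_exp, mul_comm]
  have hray_shift : (fun r : ℝ ↦ fourierLaplace (fun t ↦ f (t + β))
      (volume.restrict ((· + β) ⁻¹' Ioi 0)) (r * Complex.exp (θ * I))) =O[atTop] (1 : ℝ → ℝ) := by
    simp only [fourierLaplace_comp_add_right f _ (hshift (Ioi 0))]
    refine (hfactor.smul hray).congr_right fun r ↦ ?_
    simp [← Real.exp_add]
  have hzero : ∀ᵐ t ∂volume.restrict ((· + β) ⁻¹' Ioi 0 ∩ Iic 0), f (t + β) = 0 :=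
    ae_eq_zero_of_isBigO_one_fourierLaplace_ray (measurableSet_Ioi.preimage (by fun_prop))
      (by simp [bddBelow_Ioi]) (hf.comp_add_right (hshift (Ioi 0))) hθ hray_shift
  have hpre : (· + β) ⁻¹' Ioi 0 ∩ Iic 0 = (· + β) ⁻¹' Ioc 0 β := by ext t; simp
  rw [hpre] at hzero
  rw [← restrict_Ioc_eq_restrict_Icc, ← (hshift (Ioc 0 β)).map_eq]
  exact (measurableEmbedding_addRight β).ae_map_iff.2 hzero

end Uniqueness

end

/-- **Phragmén–Lindelöf Laplace transform lemma** (Lemma 3.1).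
Let `f` be locally integrable on `[0,∞)` with `|f(t)| ≤ C e^{y₀ t}` a.e.
If the Laplace-type transform `∫₀^∞ e^{izt} f(t) dt` is `O(e^{-β Im z})` along
a ray `arg z = θ` in the open first quadrant, then `f = 0` a.e. on `[0,β]`. -/
theorem laplace_phragmen_lindelof
    (f : ℝ → ℂ) (hf : LocallyIntegrableOn f (Ici (0:ℝ)))
    (C y₀ : ℝ) (hC : 0 < C)
    (hbd : ∀ᵐ t ∂volume.restrict (Ici (0:ℝ)), ‖f t‖ ≤ C * Real.exp (y₀ * t))
    (β θ : ℝ) (hβ : 0 < β) (hθ : θ ∈ Ioo 0 (Real.pi / 2))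
    (C' R : ℝ) (hC' : 0 < C') (hR : 0 < R)
    (hest : ∀ r : ℝ, R ≤ r → y₀ < r * Real.sin θ →
      ‖∫ t in Ioi (0:ℝ),
          Complex.exp (Complex.I * ((r : ℂ) * Complex.exp (θ * Complex.I)) * t) * f t‖ ≤
        C' * Real.exp (-β * (r * Real.sin θ))) :
    ∀ᵐ t ∂volume.restrict (Icc (0:ℝ) β), f t = 0 := by
  have hθ' : θ ∈ Ioo 0 Real.pi := ⟨hθ.1, hθ.2.trans (half_lt_self Real.pi_pos)⟩
  have hconv : FourierLaplaceConvergent f (volume.restrict (Ioi 0)) ((y₀ + 1 : ℝ) * Complex.I) :=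
    .of_norm_le_exp (hf.aestronglyMeasurable.mono_set Ioi_subset_Ici_self)
      (ae_restrict_of_ae_restrict_of_subset Ioi_subset_Ici_self hbd) (by simp)
  refine laplace_phragmen_lindelof_general hconv hθ' (.of_bound C' ?_)
  filter_upwards [Filter.eventually_ge_atTop R, (tendsto_im_ray_atTop hθ').eventually_gt_atTop y₀]
    with r hr hy
  rw [im_ofReal_mul_exp_mul_I] at hy
  simpa [fourierLaplace] using hest r hr hy
end

section
/- Krein's representation criterion (Statement 2.4°): Let 0 < ℓ ≤ ∞ and let Φ : [0,2ℓ) → ℝ be continuous with Φ(0) = 0. Then the following are equivalent: (i) there exists a Borel measure τ on ℝ such that Φ(t) = ∫_ℝ c(λ,t) dτ(λ) for all t ∈ [0,2ℓ); (ii) the kernel K_Φ(s,t) := Φ(t+s) − Φ(|t−s|), 0 ≤ s,t < ℓ, is positive definite, i.e. for all n ∈ ℕ, t₁,…,t_n ∈ [0,ℓ) and c₁,…,c_n ∈ ℂ one has ∑_{i,j=1}^n K_Φ(t_i,t_j)·c_i·conj(c_j) ≥ 0. -/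
/-!
Put `s(λ, t) = sin (√λ t) / √λ`. Then `c(λ, s + t) - c(λ, |s - t|) = 2 s(λ, s) s(λ, t)`, so if
`Φ` is represented by `τ`, the quadratic form of Krein's kernel is an integral of squares.

For the converse fix a mesh `h`. On the grid `h ℕ` one has `c(λ, k h) = c(λ, h) F_k(1 - λ c(λ, h))`,
where `F_k(x) = (1 - T_k(x)) / (1 - x)` comes from the Chebyshev polynomial `T_k`, and
`λ ↦ 1 - λ c(λ, h)` maps `(-∞, (π / h)²]` onto `[-1, ∞)`. The product formulas for Chebyshev
polynomials turn positive definiteness of the kernel into the statement that the functional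
`F_k ↦ Φ (k h)` is nonnegative on `p²` and on `(x + 1) p²`, hence on all polynomials nonnegative on
`[-1, ∞)`. In other words, a combination `∑ aₖ c(·, k h)` that is nonnegative for `λ ≤ (π / h)²` has
`∑ aₖ Φ (k h) ≥ 0`. Letting `h = 1 / n!` become finer, the theorems of M. Riesz and Riesz–Markov
produce a measure `τ`. No mass escapes to infinity: averaging `c(λ, ·)` over a short interval of
times dominates `1 / λ` for large `λ`, and there `Φ` is small by continuity at `0`, while for
`λ → -∞` the exponential growth of `c(λ, ·)` makes `c(λ, t)` negligible against `c(λ, t')` with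
`t' > t`. This gives the representation at rational times, and dominated convergence extends it to
all times.
-/

open MeasureTheory Set

/-- The kernel `c(λ,t)` : `(1 - cos(√λ t))/λ` for `λ > 0`,
`(1 - cosh(√(-λ) t))/λ` for `λ < 0`, and `t²/2` for `λ = 0`. -/
noncomputable def cker (lam t : ℝ) : ℝ :=
  if 0 < lam then (1 - Real.cos (Real.sqrt lam * t)) / lam
  else if lam < 0 then (1 - Real.cosh (Real.sqrt (-lam) * t)) / lam
  else t ^ 2 / 2

/-- Membership of `x` in the interval `[0, ℓ)`, where `0 < ℓ ≤ ∞`. -/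
def InDom (ℓ : ENNReal) (x : ℝ) : Prop := 0 ≤ x ∧ ENNReal.ofReal x < ℓ

namespace Krein

section HalfLine

open Polynomial

variable {a : ℝ} {f g : ℝ[X]}

/-- The squares `p²` and weighted squares `(X - a) p²`, the building blocks of the polynomials that
are nonnegative on the half-line `[a, ∞)`. -/
def IsHalfLineSquare (a : ℝ) (f : ℝ[X]) : Prop :=
  ∃ p : ℝ[X], f = p ^ 2 ∨ f = (X - C a) * p ^ 2

/-- The sums of squares and weighted squares whose summands all have degree at most `d`. The bound
on the summands matters: a functional that is only controlled in low degree can then be applied to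
each summand. -/
noncomputable def halfLineCone (a : ℝ) (d : ℕ) : AddSubmonoid ℝ[X] :=
  AddSubmonoid.closure {f | IsHalfLineSquare a f ∧ f.natDegree ≤ d}

lemma IsHalfLineSquare.mul (hf : IsHalfLineSquare a f) (hg : IsHalfLineSquare a g) :
    IsHalfLineSquare a (f * g) := by
  obtain ⟨p, rfl | rfl⟩ := hf <;> obtain ⟨q, rfl | rfl⟩ := hg
  · exact ⟨p * q, .inl (by ring)⟩
  · exact ⟨p * q, .inr (by ring)⟩
  · exact ⟨p * q, .inr (by ring)⟩
  · exact ⟨(X - C a) * (p * q), .inl (by ring)⟩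

lemma IsHalfLineSquare.mem_halfLineCone (hf : IsHalfLineSquare a f) {d : ℕ}
    (hd : f.natDegree ≤ d) : f ∈ halfLineCone a d :=
  AddSubmonoid.subset_closure ⟨hf, hd⟩

lemma mul_mem_halfLineCone {d e : ℕ} (hf : f ∈ halfLineCone a d) (hg : g ∈ halfLineCone a e) :
    f * g ∈ halfLineCone a (d + e) := by
  induction hf using AddSubmonoid.closure_induction with
  | zero => simp
  | add x y _ _ hx hy => rw [add_mul]; exact add_mem hx hy
  | mem x hx =>
    induction hg using AddSubmonoid.closure_induction with
    | zero => simp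
    | add y z _ _ hy hz => rw [mul_add]; exact add_mem hy hz
    | mem y hy => exact (hx.1.mul hy.1).mem_halfLineCone (natDegree_mul_le_of_le hx.2 hy.2)

lemma C_mem_halfLineCone {c : ℝ} (hc : 0 ≤ c) (d : ℕ) : C c ∈ halfLineCone a d :=
  IsHalfLineSquare.mem_halfLineCone
    ⟨C √c, .inl (by rw [← C_pow, Real.sq_sqrt hc])⟩ (by simp)

lemma eval_nonneg_of_mem_halfLineCone {d : ℕ} (hf : f ∈ halfLineCone a d) {x : ℝ} (hx : a ≤ x) :
    0 ≤ f.eval x := by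
  induction hf using AddSubmonoid.closure_induction with
  | mem f hf =>
    obtain ⟨⟨p, rfl | rfl⟩, -⟩ := hf
    · simpa using sq_nonneg (p.eval x)
    · simpa using mul_nonneg (sub_nonneg.2 hx) (sq_nonneg (p.eval x))
  | zero => simp
  | add f g _ _ hf hg => simpa using add_nonneg hf hg

lemma nonneg_of_forall_notMem_countable {φ : ℝ → ℝ} (hφ : Continuous φ) {s : Set ℝ}
    (hs : s.Countable) (h : ∀ x > a, x ∉ s → 0 ≤ φ x) {x : ℝ} (hx : a ≤ x) : 0 ≤ φ x := by
  have hdense : Ioi a ⊆ closure (Ioi a ∩ sᶜ) :=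
    (hs.dense_compl ℝ).open_subset_closure_inter isOpen_Ioi
  have hmem : x ∈ closure (Ioi a ∩ sᶜ) :=
    closure_minimal hdense isClosed_closure (by rwa [closure_Ioi])
  exact closure_minimal (fun y hy => h y hy.1 hy.2) (isClosed_le continuous_const hφ) hmem

lemma X_sub_C_sq_dvd_of_isLocalMin {r : ℝ} (hr : g.IsRoot r)
    (hmin : IsLocalMin (fun x => g.eval x) r) : (X - C r) ^ 2 ∣ g := by
  rcases eq_or_ne g 0 with rfl | hg
  · exact dvd_zero _
  · have hderiv : g.derivative.IsRoot r := by
      simpa [Polynomial.deriv, IsRoot] using hmin.deriv_eq_zero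
    exact (le_rootMultiplicity_iff hg).1
      ((one_lt_rootMultiplicity_iff_isRoot hg).2 ⟨hr, hderiv⟩)

lemma exists_dvd_mem_halfLineCone_of_isRoot (hg : ∀ x, a ≤ x → 0 ≤ g.eval x) {r : ℝ}
    (hr : g.IsRoot r) : ∃ m, m ∣ g ∧ 0 < m.natDegree ∧ m ∈ halfLineCone a m.natDegree := by
  rcases le_or_gt r a with hra | hra
  · refine ⟨X - C r, dvd_iff_isRoot.2 hr, by simp, ?_⟩
    have hsplit : X - C r = C (a - r) + (X - C a) * 1 ^ 2 := by rw [C_sub]; ring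
    rw [natDegree_X_sub_C, hsplit]
    exact add_mem (C_mem_halfLineCone (sub_nonneg.2 hra) _)
      (IsHalfLineSquare.mem_halfLineCone ⟨1, .inr rfl⟩ (by simp))
  · have hmin : IsLocalMin (fun x => g.eval x) r := by
      filter_upwards [Ioi_mem_nhds hra] with x hx
      rw [hr.eq_zero]
      exact hg x (le_of_lt hx)
    exact ⟨(X - C r) ^ 2, X_sub_C_sq_dvd_of_isLocalMin hr hmin, by simp,
      IsHalfLineSquare.mem_halfLineCone ⟨X - C r, .inl rfl⟩ le_rfl⟩

lemma exists_dvd_mem_halfLineCone_of_aeval_eq_zero {z : ℂ} (hz : aeval z g = 0) (him : z.im ≠ 0) :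
    ∃ m, m ∣ g ∧ 0 < m.natDegree ∧ m ∈ halfLineCone a m.natDegree := by
  have hquad : X ^ 2 - C (2 * z.re) * X + C (‖z‖ ^ 2) = (X - C z.re) ^ 2 + C (z.im ^ 2) := by
    rw [Complex.sq_norm, Complex.normSq_apply]
    simp only [C_mul, C_add, C_pow, map_ofNat]
    ring
  have hdeg : ((X - C z.re) ^ 2 + C (z.im ^ 2)).natDegree = 2 := by
    rw [natDegree_add_C]; simp
  refine ⟨(X - C z.re) ^ 2 + C (z.im ^ 2),
    hquad ▸ g.quadratic_dvd_of_aeval_eq_zero_im_ne_zero hz him, by rw [hdeg]; simp, ?_⟩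
  rw [hdeg]
  exact add_mem (IsHalfLineSquare.mem_halfLineCone ⟨X - C z.re, .inl rfl⟩ (by simp))
    (C_mem_halfLineCone (sq_nonneg _) _)

lemma exists_dvd_mem_halfLineCone (hg : ∀ x, a ≤ x → 0 ≤ g.eval x) (hdeg : g.natDegree ≠ 0) :
    ∃ m, m ∣ g ∧ 0 < m.natDegree ∧ m ∈ halfLineCone a m.natDegree := by
  obtain ⟨z, hz⟩ := IsAlgClosed.exists_aeval_eq_zero ℂ g
    fun h => hdeg (natDegree_eq_of_degree_eq_some h)
  by_cases him : z.im = 0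
  · have hre : (z.re : ℂ) = z := Complex.ext rfl (by simp [him])
    rw [← hre, ← Complex.coe_algebraMap, aeval_algebraMap_apply] at hz
    exact exists_dvd_mem_halfLineCone_of_isRoot hg (by simpa using hz)
  · exact exists_dvd_mem_halfLineCone_of_aeval_eq_zero hz him

theorem mem_halfLineCone_natDegree (hg : ∀ x, a ≤ x → 0 ≤ g.eval x) :
    g ∈ halfLineCone a g.natDegree := by
  induction hn : g.natDegree using Nat.strong_induction_on generalizing g with
  | _ n ih =>
    subst hn
    by_cases hdeg : g.natDegree = 0
    · obtain ⟨c, rfl⟩ := natDegree_eq_zero.1 hdeg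
      exact C_mem_halfLineCone (by simpa using hg a le_rfl) _
    · obtain ⟨m, ⟨q, rfl⟩, hm_pos, hm_mem⟩ := exists_dvd_mem_halfLineCone hg hdeg
      obtain ⟨hm, hq⟩ := mul_ne_zero_iff.1 (ne_zero_of_natDegree_gt (Nat.pos_of_ne_zero hdeg))
      rw [natDegree_mul hm hq] at ih ⊢
      refine mul_mem_halfLineCone hm_mem (ih q.natDegree (by lia) (fun x hx => ?_) rfl)
      refine nonneg_of_forall_notMem_countable q.continuous
        (m.finite_setOfPred_isRoot hm).countable (fun y hy hroot => ?_) hx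
      have hm_eval : 0 < m.eval y :=
        (eval_nonneg_of_mem_halfLineCone hm_mem hy.le).lt_of_ne' hroot
      have hg_eval := hg y hy.le
      rw [eval_mul] at hg_eval
      exact nonneg_of_mul_nonneg_right hg_eval hm_eval

end HalfLine

section Chebyshev

open Polynomial

section CommRing

variable (R : Type*) [CommRing R]

/-- The Chebyshev polynomials of the fourth kind, `W_i(cos θ) = sin ((i + 1/2) θ) / sin (θ/2)`. -/
noncomputable def chebyshevW (i : ℕ) : R[X] :=
  Chebyshev.U R i + Chebyshev.U R (i - 1)

/-- The polynomials `F_k = (1 - T_k) / (1 - X)`, so that `F_k(cos θ) = sin² (kθ/2) / sin² (θ/2)` is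
`k` times the Fejér kernel. -/
noncomputable def fejer (k : ℕ) : R[X] :=
  ∑ i ∈ Finset.range k, chebyshevW R i

lemma fejer_zero : fejer R 0 = 0 := by
  simp [fejer]

lemma fejer_succ (k : ℕ) : fejer R (k + 1) = fejer R k + chebyshevW R k :=
  Finset.sum_range_succ _ k

lemma one_sub_X_mul_chebyshevW (i : ℕ) :
    (1 - X) * chebyshevW R i = Chebyshev.T R i - Chebyshev.T R (i + 1) := by
  have hT := Chebyshev.T_eq_U_sub_X_mul_U R i
  have hT_succ := Chebyshev.T_eq_X_mul_U_sub_U R ((i : ℤ) - 1)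
  rw [show (i : ℤ) - 1 + 2 = i + 1 by ring, show (i : ℤ) - 1 + 1 = i by ring] at hT_succ
  rw [hT, hT_succ, chebyshevW]
  ring

lemma one_sub_X_mul_fejer (k : ℕ) : (1 - X) * fejer R k = 1 - Chebyshev.T R k := by
  induction k with
  | zero => simp [fejer_zero]
  | succ k ih =>
    rw [fejer_succ, mul_add, ih, one_sub_X_mul_chebyshevW]
    push_cast
    ring

lemma fejer_eval_one (k : ℕ) : (fejer R k).eval 1 = k ^ 2 := by
  induction k with
  | zero => simp [fejer_zero]
  | succ k ih =>
    simp only [fejer_succ, chebyshevW, eval_add, ih, Chebyshev.U_eval_one]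
    push_cast
    ring

end CommRing

section IsDomain

variable (R : Type*) [CommRing R] [IsDomain R]

lemma two_mul_X_add_one_mul_U_mul_U (i j : ℕ) :
    2 * (X + 1) * (Chebyshev.U R i * Chebyshev.U R j) =
      fejer R (i + j + 2) - fejer R ((i : ℤ) - j).natAbs := by
  have hne : (1 - X : R[X]) * (1 - X ^ 2) ≠ 0 := fun h => by simpa using congrArg (eval 0) h
  -- After multiplication by `(1 - X) (1 - X ^ 2)`, the `U` and `F` on both sides become
  -- combinations of `T`, whose products are given by `T_mul_T`.
  apply mul_left_cancel₀ hne
  have hdiag := Chebyshev.T_mul_T R (i + 1) (j + 1)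
  have hright := Chebyshev.T_mul_T R (i + 1) (j + 2)
  have hleft := Chebyshev.T_mul_T R (i + 2) (j + 1)
  have hdiag' := Chebyshev.T_mul_T R (i + 2) (j + 2)
  have hdiff := Chebyshev.T_add_one R (i - j)
  have hsum := Chebyshev.T_add_one R (i + j + 3)
  have hi := Chebyshev.one_sub_X_sq_mul_U_eq_pol_in_T R i
  have hj := Chebyshev.one_sub_X_sq_mul_U_eq_pol_in_T R j
  have hF := one_sub_X_mul_fejer R (i + j + 2)
  have hF' := one_sub_X_mul_fejer R ((i : ℤ) - j).natAbs
  rw [Chebyshev.T_natAbs] at hF'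
  push_cast at hF
  rw [show (i : ℤ) + 1 + (j + 1) = i + j + 2 by ring,
    show (i : ℤ) + 1 - (j + 1) = i - j by ring] at hdiag
  rw [show (i : ℤ) + 1 + (j + 2) = i + j + 3 by ring,
    show (i : ℤ) + 1 - (j + 2) = i - j - 1 by ring] at hright
  rw [show (i : ℤ) + 2 + (j + 1) = i + j + 3 by ring,
    show (i : ℤ) + 2 - (j + 1) = i - j + 1 by ring] at hleft
  rw [show (i : ℤ) + 2 + (j + 2) = i + j + 3 + 1 by ring,
    show (i : ℤ) + 2 - (j + 2) = i - j by ring] at hdiag'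
  rw [show (i : ℤ) + j + 3 - 1 = i + j + 2 by ring] at hsum
  linear_combination 2 * ((1 - X ^ 2) * Chebyshev.U R j) * hi +
    2 * (X * Chebyshev.T R (i + 1) - Chebyshev.T R (i + 2)) * hj - (1 - X ^ 2) * (hF - hF') +
    X ^ 2 * hdiag - X * hright - X * hleft + hdiag' + hsum - X * hdiff

variable [NeZero (2 : R)]

lemma chebyshevW_mul_chebyshevW (i j : ℕ) :
    chebyshevW R i * chebyshevW R j =
      fejer R (i + j + 1) - fejer R ((i : ℤ) - j).natAbs := by
  have hX : (1 - X : R[X]) ≠ 0 := fun h => by simpa using congrArg (eval 0) h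
  have htwo : (2 : R[X]) ≠ 0 := by
    rw [← map_ofNat C 2]
    exact C_ne_zero.2 two_ne_zero
  apply mul_left_cancel₀ (mul_ne_zero htwo (pow_ne_zero 2 hX))
  have hdiag := Chebyshev.T_mul_T R i j
  have hright := Chebyshev.T_mul_T R i (j + 1)
  have hleft := Chebyshev.T_mul_T R (i + 1) j
  have hdiag' := Chebyshev.T_mul_T R (i + 1) (j + 1)
  have hdiff := Chebyshev.T_add_one R (i - j)
  have hsum := Chebyshev.T_add_one R (i + j + 1)
  have hi := one_sub_X_mul_chebyshevW R i
  have hj := one_sub_X_mul_chebyshevW R j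
  have hF := one_sub_X_mul_fejer R (i + j + 1)
  have hF' := one_sub_X_mul_fejer R ((i : ℤ) - j).natAbs
  rw [Chebyshev.T_natAbs] at hF'
  push_cast at hF
  rw [show (i : ℤ) + (j + 1) = i + j + 1 by ring,
    show (i : ℤ) - (j + 1) = i - j - 1 by ring] at hright
  rw [show (i : ℤ) + 1 + j = i + j + 1 by ring,
    show (i : ℤ) + 1 - j = i - j + 1 by ring] at hleft
  rw [show (i : ℤ) + 1 + (j + 1) = i + j + 1 + 1 by ring,
    show (i : ℤ) + 1 - (j + 1) = i - j by ring] at hdiag'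
  rw [show (i : ℤ) + j + 1 - 1 = i + j by ring] at hsum
  linear_combination 2 * ((1 - X) * chebyshevW R j) * hi +
    2 * (Chebyshev.T R i - Chebyshev.T R (i + 1)) * hj - 2 * (1 - X) * (hF - hF') +
    hdiag - hright - hleft + hdiag' - hdiff + hsum

lemma degree_chebyshevW (i : ℕ) : (chebyshevW R i).degree = i := by
  cases i with
  | zero => simp [chebyshevW]
  | succ i =>
    rw [chebyshevW, show ((i + 1 : ℕ) : ℤ) - 1 = (i : ℕ) by simp,
      degree_add_eq_left_of_degree_lt, Chebyshev.degree_U_natCast]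
    simp only [Chebyshev.degree_U_natCast]
    exact_mod_cast i.lt_succ_self

lemma degree_fejer_succ (k : ℕ) : (fejer R (k + 1)).degree = k := by
  induction k with
  | zero => simp [fejer_succ, fejer_zero, degree_chebyshevW]
  | succ k ih =>
    rw [fejer_succ, degree_add_eq_right_of_degree_lt, degree_chebyshevW]
    rw [ih, degree_chebyshevW]
    exact_mod_cast k.lt_succ_self

lemma fejer_mem_degreeLT (k : ℕ) : fejer R k ∈ degreeLT R k := by
  cases k with
  | zero => simp [fejer_zero]
  | succ k =>
    rw [mem_degreeLT, degree_fejer_succ]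
    exact_mod_cast k.lt_succ_self

/-- The Chebyshev polynomials of the second kind as a polynomial sequence. -/
noncomputable def chebyshevUSequence : Polynomial.Sequence R :=
  ⟨fun i => Chebyshev.U R i, Chebyshev.degree_U_natCast R⟩

/-- The Chebyshev polynomials of the fourth kind as a polynomial sequence. -/
noncomputable def chebyshevWSequence : Polynomial.Sequence R :=
  ⟨chebyshevW R, degree_chebyshevW R⟩

/-- The polynomials `fejer` as a polynomial sequence, shifted because `fejer 0 = 0`. -/
noncomputable def fejerSequence : Polynomial.Sequence R :=
  ⟨fun k => fejer R (k + 1), degree_fejer_succ R⟩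

end IsDomain

section Field

variable {K : Type*} [Field K]

lemma isUnit_leadingCoeff_sequence (S : Polynomial.Sequence K) (i : ℕ) :
    IsUnit (S i).leadingCoeff :=
  (leadingCoeff_ne_zero.2 (S.ne_zero i)).isUnit

lemma exists_eq_sum_smul_sequence (S : Polynomial.Sequence K) {p : K[X]} {m : ℕ}
    (hp : p.natDegree ≤ m) : ∃ α : Fin (m + 1) → K, p = ∑ i, α i • S i := by
  have hmem : p ∈ Submodule.span K (S '' Iic m) := by
    rw [S.span_degreeLE fun i _ => isUnit_leadingCoeff_sequence S i, mem_degreeLE]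
    exact natDegree_le_iff_degree_le.1 hp
  have himage : S '' Iic m = range fun i : Fin (m + 1) => S i := by
    ext f
    simp [Fin.exists_iff]
  rw [himage, Submodule.mem_span_range_iff_exists_fun] at hmem
  obtain ⟨α, hα⟩ := hmem
  exact ⟨α, hα.symm⟩

lemma exists_linearMap_fejer [NeZero (2 : K)] {M : Type*} [AddCommGroup M] [Module K M] (φ : ℕ → M)
    (hφ : φ 0 = 0) : ∃ L : K[X] →ₗ[K] M, ∀ k, L (fejer K k) = φ k := by
  let b := (fejerSequence K).basis (isUnit_leadingCoeff_sequence _)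
  refine ⟨b.constr K fun k => φ (k + 1), fun k => ?_⟩
  cases k with
  | zero => rw [fejer_zero, map_zero, hφ]
  | succ k =>
    have hb : b k = fejer K (k + 1) := Polynomial.Sequence.basis_eq_self _ _ k
    rw [← hb, b.constr_basis]

end Field

end Chebyshev

end Krein

namespace InDom

variable {ℓ : ENNReal} {s t : ℝ}

lemma mono (ht : InDom ℓ t) (hs : 0 ≤ s) (hst : s ≤ t) : InDom ℓ s :=
  ⟨hs, (ENNReal.ofReal_le_ofReal hst).trans_lt ht.2⟩

lemma add (hs : InDom ℓ s) (ht : InDom ℓ t) : InDom (2 * ℓ) (s + t) := by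
  refine ⟨add_nonneg hs.1 ht.1, ?_⟩
  rw [ENNReal.ofReal_add hs.1 ht.1, two_mul]
  exact ENNReal.add_lt_add hs.2 ht.2

lemma abs_sub (hs : InDom ℓ s) (ht : InDom ℓ t) : InDom (2 * ℓ) |s - t| :=
  (hs.add ht).mono (abs_nonneg _) (abs_le.2 ⟨by linarith [hs.1], by linarith [ht.1]⟩)

lemma of_two_mul_le (ht : InDom (2 * ℓ) t) (hs : 0 ≤ s) (hst : 2 * s ≤ t) : InDom ℓ s := by
  refine ⟨hs, ?_⟩
  have htwo : ENNReal.ofReal (2 * s) < 2 * ℓ := (ENNReal.ofReal_le_ofReal hst).trans_lt ht.2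
  rw [ENNReal.ofReal_mul zero_le_two, ENNReal.ofReal_ofNat] at htwo
  exact lt_of_mul_lt_mul_left' htwo

lemma exists_gt (ht : InDom ℓ t) : ∃ u, t < u ∧ InDom ℓ u := by
  obtain ⟨r, hr, htr, hrℓ⟩ := ENNReal.lt_iff_exists_real_btwn.1 ht.2
  exact ⟨r, lt_of_not_ge fun h => htr.not_ge (ENNReal.ofReal_le_ofReal h), hr, hrℓ⟩

lemma exists_rat_gt (ht : InDom ℓ t) : ∃ q : ℚ, t < q ∧ InDom ℓ q := by
  obtain ⟨u, htu, hu⟩ := ht.exists_gt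
  obtain ⟨q, htq, hqu⟩ := exists_rat_btwn htu
  exact ⟨q, htq, hu.mono (ht.1.trans htq.le) hqu.le⟩

lemma mem_closure_inter_range_ratCast (ht : InDom ℓ t) :
    t ∈ closure ({s | InDom ℓ s} ∩ range ((↑) : ℚ → ℝ)) := by
  obtain ⟨u, htu, hu⟩ := ht.exists_gt
  refine Metric.mem_closure_iff.2 fun ε hε => ?_
  obtain ⟨q, htq, hq⟩ := exists_rat_btwn (lt_min htu (lt_add_of_pos_right t hε))
  refine ⟨q, ⟨hu.mono (ht.1.trans htq.le) (hq.le.trans (min_le_left _ _)), q, rfl⟩, ?_⟩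
  rw [dist_comm, Real.dist_eq, abs_of_pos (sub_pos.2 htq)]
  linarith [hq.trans_le (min_le_right _ _)]

end InDom

namespace Krein

section Trigonometry

open Real

/-- The function `sinh x / x`, extended continuously to `0`. -/
noncomputable def sinhc : ℝ → ℝ := dslope sinh 0

lemma sinhc_zero : sinhc 0 = 1 := by simp [sinhc]

lemma sinhc_of_ne_zero {x : ℝ} (hx : x ≠ 0) : sinhc x = sinh x / x := by
  rw [sinhc, dslope_of_ne _ hx, slope_def_field]
  simp

lemma continuous_sinhc : Continuous sinhc :=
  continuousOn_univ.1
    ((continuousOn_dslope Filter.univ_mem).2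
      ⟨continuous_sinh.continuousOn, differentiable_sinh.differentiableAt⟩)

lemma mul_sinh_le_sinh_add {x y : ℝ} (hx : 0 ≤ x) (hy : 0 ≤ y) : y * sinh x ≤ sinh (x + y) := by
  have hcosh : y ≤ cosh y := (self_le_sinh_iff.2 hy).trans (sinh_lt_cosh y).le
  calc y * sinh x ≤ sinh x * cosh y := by
        rw [mul_comm]
        exact mul_le_mul_of_nonneg_left hcosh (sinh_nonneg_iff.2 hx)
    _ ≤ sinh x * cosh y + cosh x * sinh y :=
      le_add_of_nonneg_right (mul_nonneg (cosh_pos x).le (sinh_nonneg_iff.2 hy))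
    _ = sinh (x + y) := (sinh_add x y).symm

lemma two_mul_sin_half_mul_sum_cos (k : ℕ) (θ : ℝ) :
    2 * sin (θ / 2) * ∑ j ∈ Finset.Icc 1 k, cos (j * θ) =
      sin ((k + 1 / 2) * θ) - sin (θ / 2) := by
  induction k with
  | zero => simp; ring_nf
  | succ k ih =>
    rw [Finset.sum_Icc_succ_top (by lia), mul_add, ih]
    push_cast
    rw [show ((k : ℝ) + 1 + 1 / 2) * θ = (k + 1) * θ + θ / 2 by ring,
      show ((k : ℝ) + 1 / 2) * θ = (k + 1) * θ - θ / 2 by ring, sin_add, sin_sub]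
    ring

lemma sum_cos_le (k : ℕ) {θ : ℝ} (hθ : 0 < θ) (hθπ : θ ≤ π) :
    ∑ j ∈ Finset.Icc 1 k, cos (j * θ) ≤ π / (2 * θ) := by
  have hJordan : 2 / π * (θ / 2) ≤ sin (θ / 2) :=
    mul_le_sin (half_pos hθ).le (div_le_div_of_nonneg_right hθπ two_pos.le)
  have hsin : 0 < sin (θ / 2) := lt_of_lt_of_le (by positivity) hJordan
  refine le_of_mul_le_mul_left ?_ (mul_pos two_pos hsin)
  calc 2 * sin (θ / 2) * ∑ j ∈ Finset.Icc 1 k, cos (j * θ)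
      ≤ 1 := by
        rw [two_mul_sin_half_mul_sum_cos]
        linarith [sin_le_one ((k + 1 / 2) * θ)]
    _ = 2 * (2 / π * (θ / 2)) * (π / (2 * θ)) := by field_simp
    _ ≤ 2 * sin (θ / 2) * (π / (2 * θ)) := by gcongr

end Trigonometry

section Kernel

open Real

variable {lam s t h : ℝ}

/-- The sine companion `s(λ,t)` of `cker`: `sin(√λ t)/√λ` for `λ > 0`, `sinh(√(-λ) t)/√(-λ)` for
`λ < 0`, and `t` for `λ = 0`. -/
noncomputable def sker (lam t : ℝ) : ℝ :=
  if 0 < lam then sin (√lam * t) / √lam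
  else if lam < 0 then sinh (√(-lam) * t) / √(-lam)
  else t

lemma sker_of_pos (hlam : 0 < lam) (t : ℝ) : sker lam t = sin (√lam * t) / √lam :=
  if_pos hlam

lemma sker_of_neg (hlam : lam < 0) (t : ℝ) : sker lam t = sinh (√(-lam) * t) / √(-lam) := by
  rw [sker, if_neg hlam.not_gt, if_pos hlam]

lemma sker_zero_left (t : ℝ) : sker 0 t = t := by simp [sker]

lemma cker_zero_left (t : ℝ) : cker 0 t = t ^ 2 / 2 := by simp [cker]

lemma cker_of_pos (hlam : 0 < lam) (t : ℝ) : cker lam t = (1 - cos (√lam * t)) / lam :=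
  if_pos hlam

lemma cker_of_neg (hlam : lam < 0) (t : ℝ) : cker lam t = (1 - cosh (√(-lam) * t)) / lam := by
  rw [cker, if_neg hlam.not_gt, if_pos hlam]

lemma cker_zero_right (lam : ℝ) : cker lam 0 = 0 := by simp [cker]

lemma cker_abs (lam t : ℝ) : cker lam |t| = cker lam t := by
  rcases abs_choice t with h | h <;> simp [h, cker]

lemma cker_add_sub_cker_abs_sub (lam s t : ℝ) :
    cker lam (s + t) - cker lam |s - t| = 2 * (sker lam s * sker lam t) := by
  rw [cker_abs]
  rcases lt_trichotomy lam 0 with hlam | rfl | hlam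
  · simp only [cker_of_neg hlam, sker_of_neg hlam, div_mul_div_comm,
      mul_self_sqrt (neg_nonneg.2 hlam.le), mul_add, mul_sub, cosh_add, cosh_sub, div_neg]
    ring
  · simp only [cker_zero_left, sker_zero_left]
    ring
  · simp only [cker_of_pos hlam, sker_of_pos hlam, div_mul_div_comm, mul_self_sqrt hlam.le,
      mul_add, mul_sub, cos_add, cos_sub]
    ring

lemma cker_eq_two_mul_sker_sq (lam t : ℝ) : cker lam t = 2 * sker lam (t / 2) ^ 2 := by
  simpa [cker_zero_right, sq] using cker_add_sub_cker_abs_sub lam (t / 2) (t / 2)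

lemma cker_nonneg (lam t : ℝ) : 0 ≤ cker lam t := by
  rw [cker_eq_two_mul_sker_sq]
  positivity

lemma sker_eq_mul_sinc_mul_sinhc (lam t : ℝ) :
    sker lam t = t * sinc (√lam * t) * sinhc (√(-lam) * t) := by
  rcases eq_or_ne t 0 with rfl | ht
  · simp [sker]
  rcases lt_trichotomy lam 0 with hlam | rfl | hlam
  · have hsqrt : √(-lam) ≠ 0 := (sqrt_pos.2 (neg_pos.2 hlam)).ne'
    rw [sker_of_neg hlam, sqrt_eq_zero_of_nonpos hlam.le, zero_mul, sinc_zero,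
      sinhc_of_ne_zero (mul_ne_zero hsqrt ht)]
    field_simp
  · simp [sker_zero_left, sinhc_zero]
  · have hsqrt : √lam ≠ 0 := (sqrt_pos.2 hlam).ne'
    rw [sker_of_pos hlam, sqrt_eq_zero_of_nonpos (neg_nonpos.2 hlam.le), zero_mul, sinhc_zero,
      sinc_of_ne_zero (mul_ne_zero hsqrt ht)]
    field_simp

lemma continuous_cker : Continuous fun x : ℝ × ℝ => cker x.1 x.2 := by
  have := continuous_sinc
  have := continuous_sinhc
  simp only [cker_eq_two_mul_sker_sq, sker_eq_mul_sinc_mul_sinhc]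
  fun_prop

lemma continuous_cker_left (t : ℝ) : Continuous fun lam => cker lam t :=
  continuous_cker.comp (.prodMk_left t)

lemma continuous_cker_right (lam : ℝ) : Continuous fun t => cker lam t :=
  continuous_cker.comp (.prodMk_right lam)

lemma one_sub_mul_cker_of_nonneg (hlam : 0 ≤ lam) (t : ℝ) :
    1 - lam * cker lam t = cos (√lam * t) := by
  rcases hlam.eq_or_lt with rfl | hlam
  · simp
  · rw [cker_of_pos hlam, mul_div_cancel₀ _ hlam.ne', sub_sub_cancel]

lemma one_sub_mul_cker_of_nonpos (hlam : lam ≤ 0) (t : ℝ) :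
    1 - lam * cker lam t = cosh (√(-lam) * t) := by
  rcases hlam.eq_or_lt with rfl | hlam
  · simp
  · rw [cker_of_neg hlam, mul_div_cancel₀ _ hlam.ne, sub_sub_cancel]

lemma mul_cker_le_two (lam t : ℝ) : lam * cker lam t ≤ 2 := by
  rcases le_total 0 lam with hlam | hlam
  · linarith [one_sub_mul_cker_of_nonneg hlam t, neg_one_le_cos (√lam * t)]
  · linarith [mul_nonpos_of_nonpos_of_nonneg hlam (cker_nonneg lam t)]

lemma cker_le_sq_div_two (hlam : 0 ≤ lam) (t : ℝ) : cker lam t ≤ t ^ 2 / 2 := by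
  have hsinc : sinc (√lam * (t / 2)) ^ 2 ≤ 1 := (sq_le_one_iff_abs_le_one _).2 (abs_sinc_le_one _)
  rw [cker_eq_two_mul_sker_sq, sker_eq_mul_sinc_mul_sinhc,
    sqrt_eq_zero_of_nonpos (neg_nonpos.2 hlam), zero_mul, sinhc_zero]
  nlinarith [mul_le_mul_of_nonneg_left hsinc (sq_nonneg t)]

lemma cker_le_cker_of_nonpos (hlam : lam ≤ 0) (hs : 0 ≤ s) (hst : s ≤ t) :
    cker lam s ≤ cker lam t := by
  rcases hlam.eq_or_lt with rfl | hlam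
  · simp only [cker_zero_left]
    gcongr
  · rw [cker_of_neg hlam, cker_of_neg hlam]
    refine div_le_div_of_nonpos_of_le hlam.le (sub_le_sub_left (cosh_le_cosh.2 ?_) 1)
    rw [abs_of_nonneg (by positivity), abs_of_nonneg (mul_nonneg (sqrt_nonneg _) (hs.trans hst))]
    gcongr

lemma sqrt_neg_mul_sker_le_sker_add (hlam : lam < 0) (hs : 0 ≤ s) (ht : 0 ≤ t) :
    √(-lam) * t * sker lam s ≤ sker lam (s + t) := by
  rw [sker_of_neg hlam, sker_of_neg hlam, ← mul_div_assoc, mul_add]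
  gcongr
  exact mul_sinh_le_sinh_add (by positivity) (by positivity)

lemma sker_nonneg_of_neg (hlam : lam < 0) (ht : 0 ≤ t) : 0 ≤ sker lam t := by
  rw [sker_of_neg hlam]
  exact div_nonneg (sinh_nonneg_iff.2 (by positivity)) (sqrt_nonneg _)

lemma neg_mul_sq_mul_cker_le (lam : ℝ) (hs : 0 ≤ s) (hst : s ≤ t) :
    -lam * (t - s) ^ 2 * cker lam s ≤ 4 * cker lam t := by
  rcases le_or_gt 0 lam with hlam | hlam
  · have hneg : -lam * (t - s) ^ 2 * cker lam s ≤ 0 :=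
      mul_nonpos_of_nonpos_of_nonneg
        (mul_nonpos_of_nonpos_of_nonneg (neg_nonpos.2 hlam) (sq_nonneg _)) (cker_nonneg _ _)
    linarith [cker_nonneg lam t]
  · have hsker := sqrt_neg_mul_sker_le_sker_add hlam (s := s / 2) (t := (t - s) / 2)
      (by linarith) (by linarith)
    have hleft : 0 ≤ √(-lam) * ((t - s) / 2) * sker lam (s / 2) :=
      mul_nonneg (mul_nonneg (sqrt_nonneg _) (by linarith))
        (sker_nonneg_of_neg hlam (by linarith))
    calc -lam * (t - s) ^ 2 * cker lam s
        = 8 * (√(-lam) * ((t - s) / 2) * sker lam (s / 2)) ^ 2 := by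
          rw [cker_eq_two_mul_sker_sq, mul_pow, mul_pow, sq_sqrt (by linarith)]
          ring
      _ ≤ 8 * sker lam (s / 2 + (t - s) / 2) ^ 2 := by gcongr
      _ = 4 * cker lam t := by
          rw [cker_eq_two_mul_sker_sq lam t, show s / 2 + (t - s) / 2 = t / 2 by ring]
          ring

lemma div_pi_le_sker_half (ht : 0 < t) (hlam : lam ≤ (π / t) ^ 2) : t / π ≤ sker lam (t / 2) := by
  have htπ : t / π ≤ t / 2 := div_le_div_of_nonneg_left ht.le two_pos two_le_pi
  rcases lt_trichotomy lam 0 with hneg | rfl | hpos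
  · have hsqrt : 0 < √(-lam) := sqrt_pos.2 (neg_pos.2 hneg)
    refine htπ.trans ?_
    rw [sker_of_neg hneg, le_div_iff₀ hsqrt, mul_comm]
    exact self_le_sinh_iff.2 (by positivity)
  · rwa [sker_zero_left]
  · have hsqrt : √lam * t ≤ π := (le_div_iff₀ ht).1 ((sqrt_le_left (by positivity)).2 hlam)
    rw [sker_of_pos hpos, le_div_iff₀ (sqrt_pos.2 hpos)]
    calc t / π * √lam = 2 / π * (√lam * (t / 2)) := by ring
      _ ≤ sin (√lam * (t / 2)) := mul_le_sin (by positivity) (by linarith)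

lemma two_mul_sq_le_cker (ht : 0 < t) (hlam : lam ≤ (π / t) ^ 2) :
    2 * (t / π) ^ 2 ≤ cker lam t := by
  rw [cker_eq_two_mul_sker_sq]
  gcongr
  exact div_pi_le_sker_half ht hlam

lemma cker_le_cker_add_mul_inv (lam : ℝ) (hs : 0 ≤ s) (hst : s ≤ t) :
    cker lam s ≤ cker lam t + (t ^ 2 / 2 + 2) * (1 + |lam|)⁻¹ := by
  rcases le_total lam 0 with hlam | hlam
  · exact le_add_of_le_of_nonneg (cker_le_cker_of_nonpos hlam hs hst) (by positivity)
  · refine le_add_of_nonneg_of_le (cker_nonneg lam t) ?_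
    rw [abs_of_nonneg hlam, ← div_eq_mul_inv, le_div_iff₀ (by positivity), mul_add, mul_one,
      mul_comm _ lam]
    have hsq : s ^ 2 / 2 ≤ t ^ 2 / 2 := by gcongr
    exact add_le_add ((cker_le_sq_div_two hlam s).trans hsq) (mul_cker_le_two lam s)

lemma inv_le_average_cker {k : ℕ} (hlam : 0 < lam) (hh : 0 < h) (hπ : √lam * h ≤ π)
    (hk : π ≤ k * (√lam * h)) :
    lam⁻¹ ≤ 2 / k * ∑ j ∈ Finset.Icc 1 k, cker lam (j * h) := by
  have hθ : 0 < √lam * h := mul_pos (sqrt_pos.2 hlam) hh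
  have hk0 : (0 : ℝ) < k := pos_of_mul_pos_left (pi_pos.trans_le hk) hθ.le
  have hsum : ∑ j ∈ Finset.Icc 1 k, cos (j * (√lam * h)) ≤ k / 2 := by
    refine (sum_cos_le k hθ hπ).trans ?_
    rw [div_le_div_iff₀ (by positivity) two_pos]
    linarith
  have hcker : lam * ∑ j ∈ Finset.Icc 1 k, cker lam (j * h) =
      k - ∑ j ∈ Finset.Icc 1 k, cos (j * (√lam * h)) := by
    rw [Finset.mul_sum, eq_sub_iff_add_eq, ← Finset.sum_add_distrib]
    simp only [mul_left_comm _ (√lam) h, ← one_sub_mul_cker_of_nonneg hlam.le, add_sub_cancel]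
    simp
  rw [inv_le_iff_one_le_mul₀' hlam, mul_left_comm, hcker]
  calc (1 : ℝ) = 2 / k * (k - k / 2) := by field_simp; norm_num
    _ ≤ 2 / k * (k - ∑ j ∈ Finset.Icc 1 k, cos (j * (√lam * h))) := by gcongr

end Kernel

/-- Positive definiteness of Krein's kernel `(s, t) ↦ Φ (s + t) - Φ |s - t|` on `[0, ℓ)`, tested on
real coefficients. -/
def IsKreinPosDef (ℓ : ENNReal) (Φ : ℝ → ℝ) : Prop :=
  ∀ (n : ℕ) (t c : Fin n → ℝ), (∀ i, InDom ℓ (t i)) →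
    0 ≤ ∑ i, ∑ j, (Φ (t i + t j) - Φ |t i - t j|) * c i * c j

section Grid

open Real Polynomial

variable {ℓ : ENNReal} {Φ : ℝ → ℝ} {h : ℝ}

lemma eval_T_one_sub_mul_cker (lam h : ℝ) (k : ℕ) :
    (Chebyshev.T ℝ k).eval (1 - lam * cker lam h) = 1 - lam * cker lam (k * h) := by
  rcases le_total 0 lam with hlam | hlam
  · simp only [one_sub_mul_cker_of_nonneg hlam, Chebyshev.T_real_cos, Int.cast_natCast,
      mul_left_comm]
  · simp only [one_sub_mul_cker_of_nonpos hlam, Chebyshev.T_real_cosh, Int.cast_natCast,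
      mul_left_comm]

lemma cker_natCast_mul (lam h : ℝ) (k : ℕ) :
    cker lam (k * h) = cker lam h * (fejer ℝ k).eval (1 - lam * cker lam h) := by
  rcases eq_or_ne lam 0 with rfl | hlam
  · simp only [cker_zero_left, zero_mul, sub_zero, fejer_eval_one]
    ring
  · have hF := congrArg (eval (1 - lam * cker lam h)) (one_sub_X_mul_fejer ℝ k)
    simp only [eval_mul, eval_sub, eval_one, eval_X, eval_T_one_sub_mul_cker] at hF
    refine mul_left_cancel₀ hlam ?_
    linear_combination -hF

lemma exists_one_sub_mul_cker_eq (hh : 0 < h) {x : ℝ} (hx : -1 ≤ x) :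
    ∃ lam ≤ (π / h) ^ 2, 1 - lam * cker lam h = x := by
  rcases le_total x 1 with hx1 | hx1
  · have hθ := arccos_nonneg x
    refine ⟨(arccos x / h) ^ 2, by gcongr; exact arccos_le_pi x, ?_⟩
    rw [one_sub_mul_cker_of_nonneg (sq_nonneg _), sqrt_sq (by positivity),
      div_mul_cancel₀ _ hh.ne', cos_arccos hx hx1]
  · have hθ := arcosh_nonneg hx1
    refine ⟨-(arcosh x / h) ^ 2, (neg_nonpos.2 (sq_nonneg _)).trans (sq_nonneg _), ?_⟩
    rw [one_sub_mul_cker_of_nonpos (neg_nonpos.2 (sq_nonneg _)), neg_neg, sqrt_sq (by positivity),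
      div_mul_cancel₀ _ hh.ne', cosh_arcosh hx1]

/-- The numbers `L (w * (S i * S j))` are the entries of Krein's kernel at the nodes
`(i + σ / 2) h`, so `L (w * p ^ 2)` is a value of its quadratic form. -/
lemma map_mul_sq_nonneg (hΦ : IsKreinPosDef ℓ Φ) (hh : 0 ≤ h) {L : ℝ[X] →ₗ[ℝ] ℝ}
    (hL : ∀ k : ℕ, L (fejer ℝ k) = Φ (k * h)) {S : Polynomial.Sequence ℝ} {w : ℝ[X]} {σ : ℕ}
    (hS : ∀ i j : ℕ, w * (S i * S j) = fejer ℝ (i + j + σ) - fejer ℝ ((i : ℤ) - j).natAbs)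
    {p : ℝ[X]} (hp : InDom (2 * ℓ) ((2 * p.natDegree + σ : ℕ) * h)) : 0 ≤ L (w * p ^ 2) := by
  obtain ⟨α, hα⟩ := exists_eq_sum_smul_sequence S (p := p) le_rfl
  set t : Fin (p.natDegree + 1) → ℝ := fun i => (i + σ / 2) * h with ht
  have hnode (i) : InDom ℓ (t i) := by
    refine hp.of_two_mul_le (by positivity) ?_
    have hi : (i : ℝ) ≤ p.natDegree := by exact_mod_cast Nat.lt_succ_iff.1 i.2
    calc 2 * t i = (2 * i + σ) * h := by rw [ht]; ring
      _ ≤ (2 * p.natDegree + σ : ℕ) * h := by push_cast; gcongr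
  have hentry (i j : Fin (p.natDegree + 1)) :
      L (w * (S i * S j)) = Φ (t i + t j) - Φ |t i - t j| := by
    have hadd : t i + t j = ((i + j + σ : ℕ) : ℝ) * h := by rw [ht]; push_cast; ring
    have hsub : |t i - t j| = (((i : ℤ) - j).natAbs : ℝ) * h := by
      have hdiff : t i - t j = ((i : ℝ) - j) * h := by rw [ht]; ring
      rw [Nat.cast_natAbs, Int.cast_abs, hdiff, abs_mul, abs_of_nonneg hh]
      push_cast
      rfl
    rw [hS, map_sub, hL, hL, hadd, hsub]
  have hexpand : w * p ^ 2 = ∑ i, ∑ j, (α j * α i) • (w * (S i * S j)) := by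
    conv_lhs => rw [sq, hα, Finset.sum_mul_sum, Finset.mul_sum]
    simp only [Finset.mul_sum, smul_mul_assoc, mul_smul_comm, smul_smul]
  have hform : L (w * p ^ 2) = ∑ i, ∑ j, (Φ (t i + t j) - Φ |t i - t j|) * α i * α j := by
    rw [hexpand]
    simp only [map_sum, map_smul, hentry, smul_eq_mul]
    exact Finset.sum_congr rfl fun i _ => Finset.sum_congr rfl fun j _ => by ring
  exact hform ▸ hΦ _ t α hnode

lemma map_nonneg_of_mem_halfLineCone (hΦ : IsKreinPosDef ℓ Φ) (hh : 0 ≤ h) {L : ℝ[X] →ₗ[ℝ] ℝ}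
    (hL : ∀ k : ℕ, L (fejer ℝ k) = Φ (k * h)) {d : ℕ} (hd : InDom (2 * ℓ) ((d + 1 : ℕ) * h))
    {f : ℝ[X]} (hf : f ∈ halfLineCone (-1) d) : 0 ≤ L f := by
  have hmono {n : ℕ} (hn : n ≤ d + 1) : InDom (2 * ℓ) (n * h) :=
    hd.mono (by positivity) (by gcongr)
  induction hf using AddSubmonoid.closure_induction with
  | zero => simp
  | add x y _ _ hx hy => rw [map_add]; exact add_nonneg hx hy
  | mem f hf =>
    obtain ⟨⟨p, rfl | rfl⟩, hdeg⟩ := hf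
    · rw [natDegree_pow] at hdeg
      rw [← one_mul (p ^ 2)]
      exact map_mul_sq_nonneg (S := chebyshevWSequence ℝ) (σ := 1) hΦ hh hL
        (fun i j => by rw [one_mul]; exact chebyshevW_mul_chebyshevW ℝ i j) (hmono (by lia))
    · rcases eq_or_ne p 0 with rfl | hp
      · simp
      · rw [natDegree_mul (X_sub_C_ne_zero _) (pow_ne_zero 2 hp), natDegree_pow,
          natDegree_X_sub_C] at hdeg
        have htwo := map_mul_sq_nonneg (S := chebyshevUSequence ℝ) (w := 2 * (X + 1)) (σ := 2)
          (p := p) hΦ hh hL (two_mul_X_add_one_mul_U_mul_U ℝ) (hmono (by lia))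
        have hsplit : 2 * (X + 1) * p ^ 2 = (2 : ℝ) • ((X - C (-1)) * p ^ 2) := by
          rw [smul_eq_C_mul, map_ofNat, C_neg, C_1]
          ring
        rw [hsplit, map_smul] at htwo
        exact nonneg_of_mul_nonneg_right htwo two_pos

/-- The value at the grid function `k ↦ F (k h)` of the functional with coefficients `a`. -/
noncomputable def gridEval (F : ℝ → ℝ) (h : ℝ) : (ℕ →₀ ℝ) →ₗ[ℝ] ℝ :=
  Finsupp.linearCombination ℝ fun k : ℕ => F (k * h)

lemma gridEval_single (F : ℝ → ℝ) (h r : ℝ) (k : ℕ) :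
    gridEval F h (Finsupp.single k r) = r * F (k * h) :=
  Finsupp.linearCombination_single ℝ r k

lemma gridEval_cker (lam h : ℝ) (a : ℕ →₀ ℝ) :
    gridEval (cker lam) h a =
      cker lam h * (Finsupp.linearCombination ℝ (fejer ℝ) a).eval (1 - lam * cker lam h) := by
  simp only [gridEval, Finsupp.linearCombination_apply, Finsupp.sum, eval_finsetSum, eval_smul,
    Finset.mul_sum, smul_eq_mul, cker_natCast_mul lam h]
  exact Finset.sum_congr rfl fun k _ => mul_left_comm _ _ _

lemma exists_mem_support_natDegree_lt {a : ℕ →₀ ℝ}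
    (ha : Finsupp.linearCombination ℝ (fejer ℝ) a ≠ 0) :
    ∃ k ∈ a.support, (Finsupp.linearCombination ℝ (fejer ℝ) a).natDegree < k := by
  by_contra! hle
  have hmem : Finsupp.linearCombination ℝ (fejer ℝ) a ∈
      degreeLT ℝ (Finsupp.linearCombination ℝ (fejer ℝ) a).natDegree :=
    Submodule.sum_mem _ fun k hk =>
      Submodule.smul_mem _ _ (degreeLT_mono (hle k hk) (fejer_mem_degreeLT ℝ k))
  exact (degree_eq_natDegree ha).not_lt (mem_degreeLT.1 hmem)

/-- The grid coefficients supported on the nodes `k h` inside `[0, 2ℓ)`. -/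
def gridCoeffs (ℓ : ENNReal) (h : ℝ) : Submodule ℝ (ℕ →₀ ℝ) :=
  Finsupp.supported ℝ ℝ {k : ℕ | InDom (2 * ℓ) (k * h)}

theorem gridEval_nonneg (hΦ : IsKreinPosDef ℓ Φ) (hΦ0 : Φ 0 = 0) (hh : 0 < h) {a : ℕ →₀ ℝ}
    (ha : a ∈ gridCoeffs ℓ h)
    (hpos : ∀ lam ≤ (π / h) ^ 2, 0 ≤ gridEval (cker lam) h a) : 0 ≤ gridEval Φ h a := by
  set g : ℝ[X] := Finsupp.linearCombination ℝ (fejer ℝ) a with hg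
  obtain ⟨L, hL⟩ := exists_linearMap_fejer (K := ℝ) (fun k : ℕ => Φ (k * h)) (by simpa using hΦ0)
  have hLg : L g = gridEval Φ h a := by
    simp [hg, gridEval, Finsupp.linearCombination_apply, map_finsuppSum, hL]
  have hg_nonneg (x : ℝ) (hx : -1 ≤ x) : 0 ≤ g.eval x := by
    obtain ⟨lam, hlam, rfl⟩ := exists_one_sub_mul_cker_eq hh hx
    have hcker : 0 < cker lam h := lt_of_lt_of_le (by positivity) (two_mul_sq_le_cker hh hlam)
    exact nonneg_of_mul_nonneg_right (gridEval_cker lam h a ▸ hpos lam hlam) hcker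
  rw [← hLg]
  rcases eq_or_ne g 0 with hg0 | hg0
  · rw [hg0, map_zero]
  · obtain ⟨k, hk, hdeg⟩ := exists_mem_support_natDegree_lt hg0
    have hnode : InDom (2 * ℓ) (k * h) := ha hk
    exact map_nonneg_of_mem_halfLineCone hΦ hh.le hL
      (hnode.mono (by positivity) (by gcongr; exact hdeg)) (mem_halfLineCone_natDegree hg_nonneg)

end Grid

section MajorantCone

open Filter
open scoped CompactlySupported

variable {X : Type*} [TopologicalSpace X] {D : PointedCone ℝ ((X → ℝ) × ℝ)}

/-- A cone of pairs `(f, β)` that can be read as upper bounds `∫ f ≤ β` for an unknown positive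
measure: the bounds may be weakened, they are consistent, and they cover all compactly supported
continuous functions. -/
structure IsMajorantCone (D : PointedCone ℝ ((X → ℝ) × ℝ)) : Prop where
  mono : ∀ {f g : X → ℝ} {β γ : ℝ}, (g, γ) ∈ D → f ≤ g → γ ≤ β → (f, β) ∈ D
  nonneg : ∀ {β : ℝ}, ((0 : X → ℝ), β) ∈ D → 0 ≤ β
  exists_majorant : ∀ f : C_c(X, ℝ), ∃ β, (⇑f, β) ∈ D

lemma IsMajorantCone.exists_linearMap_le (hD : IsMajorantCone D) :
    ∃ L : C_c(X, ℝ) →ₗ[ℝ] ℝ, ∀ (f : C_c(X, ℝ)) (β : ℝ), (⇑f, β) ∈ D → L f ≤ β := by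
  let s : PointedCone ℝ (C_c(X, ℝ) × ℝ) :=
    { carrier := {z | (⇑z.1, z.2) ∈ D}
      add_mem' := fun hz hw => D.add_mem hz hw
      zero_mem' := zero_mem D
      smul_mem' := fun c _ hz => Submodule.smul_mem D c hz }
  let v : (C_c(X, ℝ) × ℝ) →ₗ.[ℝ] ℝ :=
    ⟨LinearMap.range (LinearMap.inr ℝ C_c(X, ℝ) ℝ),
      (LinearMap.snd ℝ C_c(X, ℝ) ℝ).domRestrict _⟩
  have hnonneg (x : v.domain) (hx : (x : C_c(X, ℝ) × ℝ) ∈ s) : 0 ≤ v x := by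
    obtain ⟨_, b, rfl⟩ := x
    exact hD.nonneg hx
  have hdense (y : C_c(X, ℝ) × ℝ) : ∃ x : v.domain, (x : C_c(X, ℝ) × ℝ) + y ∈ s := by
    obtain ⟨β, hβ⟩ := hD.exists_majorant y.1
    refine ⟨⟨(0, β - y.2), β - y.2, rfl⟩, ?_⟩
    change (0 + ⇑y.1, β - y.2 + y.2) ∈ D
    rwa [zero_add, sub_add_cancel]
  obtain ⟨g, hgv, hgs⟩ := riesz_extension s v hnonneg hdense
  have hg (b : ℝ) : g (0, b) = b := hgv ⟨(0, b), b, rfl⟩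
  refine ⟨-(g ∘ₗ LinearMap.inl ℝ C_c(X, ℝ) ℝ), fun f β hf => ?_⟩
  have hsum : g (f, β) = g (f, 0) + β := by rw [← hg β, ← map_add]; simp [hg]
  have hpos : 0 ≤ g (f, β) := hgs (f, β) hf
  rw [LinearMap.neg_apply, LinearMap.comp_apply, LinearMap.inl_apply]
  linarith

lemma exists_compactlySupported_between [R1Space X] [LocallyCompactSpace X] {f : X → ℝ}
    (hf : Continuous f) (hf0 : 0 ≤ f) {K : Set X} (hK : IsCompact K) :
    ∃ g : C_c(X, ℝ), K.indicator f ≤ g ∧ ⇑g ≤ f := by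
  obtain ⟨χ, hχK, hχc, -, hχ⟩ :=
    exists_continuousMap_one_of_isCompact_subset_isOpen hK isOpen_univ (subset_univ K)
  refine ⟨⟨⟨fun x => f x * χ x, by fun_prop⟩, HasCompactSupport.mul_left hχc⟩, fun x => ?_,
    fun x => mul_le_of_le_one_right (hf0 x) (hχ x).2⟩
  change K.indicator f x ≤ f x * χ x
  by_cases hx : x ∈ K
  · rw [indicator_of_mem hx, hχK hx, Pi.one_apply, mul_one]
  · rw [indicator_of_notMem hx]
    exact mul_nonneg (hf0 x) (hχ x).1

variable [T2Space X] [LocallyCompactSpace X] [MeasurableSpace X] [BorelSpace X]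

theorem IsMajorantCone.exists_measure (hD : IsMajorantCone D) :
    ∃ τ : Measure X, IsFiniteMeasureOnCompacts τ ∧
      ∀ (f : C_c(X, ℝ)) (β : ℝ), (⇑f, β) ∈ D → ∫ x, f x ∂τ ≤ β := by
  obtain ⟨L, hL⟩ := hD.exists_linearMap_le
  have hLnonneg (f : C_c(X, ℝ)) (hf : 0 ≤ f) : 0 ≤ L f := by
    have hneg : (⇑(-f), (0 : ℝ)) ∈ D :=
      hD.mono (zero_mem D) (fun x => neg_nonpos.2 (hf x)) le_rfl
    simpa using hL _ _ hneg
  let Λ : C_c(X, ℝ) →ₚ[ℝ] ℝ := PositiveLinearMap.mk₀ L hLnonneg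
  exact ⟨RealRMK.rieszMeasure Λ, inferInstance,
    fun f β hf => (RealRMK.integral_rieszMeasure Λ f).trans_le (hL f β hf)⟩

variable [SigmaCompactSpace X] {τ : Measure X} [IsFiniteMeasureOnCompacts τ] {f : X → ℝ} {β : ℝ}

lemma IsMajorantCone.integrable_and_integral_le (hD : IsMajorantCone D)
    (hτ : ∀ (f : C_c(X, ℝ)) (β : ℝ), (⇑f, β) ∈ D → ∫ x, f x ∂τ ≤ β)
    (hf : Continuous f) (hf0 : 0 ≤ f) (hfβ : (f, β) ∈ D) :
    Integrable f τ ∧ ∫ x, f x ∂τ ≤ β := by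
  have hcover : AECover τ atTop (compactCovering X) :=
    ⟨ae_of_all _ fun x => by
      obtain ⟨n, hn⟩ := exists_mem_compactCovering x
      exact (eventually_ge_atTop n).mono fun m hm => compactCovering_subset X hm hn,
    fun n => (isCompact_compactCovering X n).measurableSet⟩
  have hbound (n : ℕ) : ∫ x in compactCovering X n, f x ∂τ ≤ β := by
    obtain ⟨g, hg, hgf⟩ := exists_compactlySupported_between hf hf0 (isCompact_compactCovering X n)
    rw [← integral_indicator (hcover.measurableSet n)]
    calc ∫ x, (compactCovering X n).indicator f x ∂τ ≤ ∫ x, g x ∂τ :=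
          integral_mono_of_nonneg (ae_of_all _ (indicator_nonneg fun x _ => hf0 x))
            (g.continuous.integrable_of_hasCompactSupport g.hasCompactSupport) (ae_of_all _ hg)
      _ ≤ β := hτ g β (hD.mono hfβ hgf le_rfl)
  have hint : Integrable f τ := hcover.integrable_of_integral_bounded_of_nonneg_ae β
    (fun n => hf.continuousOn.integrableOn_compact (isCompact_compactCovering X n))
    (ae_of_all _ hf0) (Eventually.of_forall hbound)
  exact ⟨hint, le_of_tendsto' (hcover.integral_tendsto_of_countably_generated hint) hbound⟩

lemma IsMajorantCone.integral_eq (hD : IsMajorantCone D)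
    (hτ : ∀ (f : C_c(X, ℝ)) (β : ℝ), (⇑f, β) ∈ D → ∫ x, f x ∂τ ≤ β)
    (hf : Continuous f) (hf0 : 0 ≤ f) (hfβ : (f, β) ∈ D) (hneg : (-f, -β) ∈ D)
    (htight : ∀ ε > 0, ∃ K, IsCompact K ∧ (Kᶜ.indicator f, ε) ∈ D) : ∫ x, f x ∂τ = β := by
  obtain ⟨hint, hle⟩ := hD.integrable_and_integral_le hτ hf hf0 hfβ
  refine le_antisymm hle (le_of_forall_pos_le_add fun ε hε => ?_)
  obtain ⟨K, hK, hKε⟩ := htight ε hε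
  obtain ⟨g, hg, hgf⟩ := exists_compactlySupported_between hf hf0 hK
  have hgD : (⇑(-g), -β + ε) ∈ D := by
    refine hD.mono (add_mem hneg hKε) (fun x => ?_) le_rfl
    have hsplit := congrFun (indicator_self_add_compl K f) x
    have hgx := hg x
    change -g x ≤ -f x + Kᶜ.indicator f x
    rw [Pi.add_apply] at hsplit
    linarith
  have hgint : Integrable g τ := g.continuous.integrable_of_hasCompactSupport g.hasCompactSupport
  have hgβ : -∫ x, g x ∂τ ≤ -β + ε := by
    rw [← integral_neg]
    exact hτ (-g) _ hgD
  linarith [integral_mono hgint hint hgf]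

end MajorantCone

section Majorants

open Real Filter Topology
open scoped CompactlySupported

variable {ℓ : ENNReal} {Φ : ℝ → ℝ} {h : ℝ}

/-- The pairs `(f, β)` such that some grid combination `∑ aₖ c(·, k h)` with `∑ aₖ Φ (k h) ≤ β`
dominates `f` on the half-line `λ ≤ (π / h)²`, where the grid kernels do not alias. -/
def gridCone (ℓ : ENNReal) (Φ : ℝ → ℝ) (h : ℝ) : PointedCone ℝ ((ℝ → ℝ) × ℝ) where
  carrier := {z | ∃ a ∈ gridCoeffs ℓ h,
    (∀ lam ≤ (π / h) ^ 2, z.1 lam ≤ gridEval (cker lam) h a) ∧ gridEval Φ h a ≤ z.2}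
  zero_mem' := ⟨0, zero_mem _, by simp, by simp⟩
  add_mem' := by
    rintro z w ⟨a, ha, haf, haβ⟩ ⟨b, hb, hbf, hbβ⟩
    refine ⟨a + b, add_mem ha hb, fun lam hlam => ?_, ?_⟩ <;> rw [map_add]
    exacts [add_le_add (haf lam hlam) (hbf lam hlam), add_le_add haβ hbβ]
  smul_mem' := by
    rintro c z ⟨a, ha, haf, haβ⟩
    refine ⟨(c : ℝ) • a, Submodule.smul_mem _ _ ha, fun lam hlam => ?_, ?_⟩ <;> rw [map_smul]
    exacts [mul_le_mul_of_nonneg_left (haf lam hlam) c.2, mul_le_mul_of_nonneg_left haβ c.2]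

lemma gridCone_mono {f g : ℝ → ℝ} {β γ : ℝ} (hg : (g, γ) ∈ gridCone ℓ Φ h)
    (hfg : ∀ lam ≤ (π / h) ^ 2, f lam ≤ g lam) (hγβ : γ ≤ β) : (f, β) ∈ gridCone ℓ Φ h := by
  obtain ⟨a, ha, hag, haγ⟩ := hg
  exact ⟨a, ha, fun lam hlam => (hfg lam hlam).trans (hag lam hlam), haγ.trans hγβ⟩

lemma mul_sum_cker_mem_gridCone {s : Finset ℕ} (hs : ∀ k ∈ s, InDom (2 * ℓ) (k * h)) (r : ℝ) :
    (fun lam => r * ∑ k ∈ s, cker lam (k * h), r * ∑ k ∈ s, Φ (k * h)) ∈ gridCone ℓ Φ h := by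
  have heval (F : ℝ → ℝ) :
      gridEval F h (∑ k ∈ s, Finsupp.single k r) = r * ∑ k ∈ s, F (k * h) := by
    simp only [map_sum, gridEval_single, Finset.mul_sum]
  exact ⟨∑ k ∈ s, Finsupp.single k r,
    sum_mem fun k hk => Finsupp.single_mem_supported ℝ r (hs k hk),
    fun lam _ => (heval (cker lam)).ge, (heval Φ).le⟩

lemma indicator_inv_mem_gridCone {δ ε : ℝ} (hδ : InDom (2 * ℓ) δ)
    (hΦ : ∀ s, 0 ≤ s → s ≤ δ → Φ s ≤ ε / 2) (hh : 0 < h) (hhδ : 2 * h ≤ δ) :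
    ((Ioi ((2 * π / δ) ^ 2)).indicator (·⁻¹), ε) ∈ gridCone ℓ Φ h := by
  have hδ0 : 0 < δ := by linarith
  set k := ⌊δ / h⌋₊
  have hkδ : k * h ≤ δ := (le_div_iff₀ hh).1 (Nat.floor_le (by positivity))
  have hδk : δ ≤ 2 * (k * h) := by
    have hlt : δ < (k + 1) * h := (div_lt_iff₀ hh).1 (Nat.lt_floor_add_one _)
    linarith
  have hk : (0 : ℝ) < k := pos_of_mul_pos_left (by linarith) hh.le
  have hjδ (j : ℕ) (hj : j ∈ Finset.Icc 1 k) : j * h ≤ δ := by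
    refine le_trans ?_ hkδ
    gcongr
    exact (Finset.mem_Icc.1 hj).2
  have hmem := mul_sum_cker_mem_gridCone (Φ := Φ)
    (fun j hj => hδ.mono (mul_nonneg j.cast_nonneg hh.le) (hjδ j hj)) (2 / k)
  refine gridCone_mono hmem (fun lam hlam => ?_) ?_
  · change (Ioi ((2 * π / δ) ^ 2)).indicator (·⁻¹) lam ≤
      2 / k * ∑ j ∈ Finset.Icc 1 k, cker lam (j * h)
    by_cases hlarge : (2 * π / δ) ^ 2 < lam
    · have hpos : 0 < lam := (sq_nonneg _).trans_lt hlarge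
      rw [indicator_of_mem (mem_Ioi.2 hlarge)]
      refine inv_le_average_cker hpos hh ?_ ?_
      · exact (le_div_iff₀ hh).1 (sqrt_le_iff.2 ⟨by positivity, hlam⟩)
      · have hsqrt : 2 * π ≤ √lam * δ := (div_le_iff₀ hδ0).1 (le_sqrt_of_sq_le hlarge.le)
        have hmesh : √lam * δ ≤ √lam * (2 * (k * h)) := by gcongr
        linarith
    · rw [indicator_of_notMem (mt mem_Ioi.1 hlarge)]
      exact mul_nonneg (by positivity) (Finset.sum_nonneg fun j _ => cker_nonneg _ _)
  · calc 2 / k * ∑ j ∈ Finset.Icc 1 k, Φ (j * h) ≤ 2 / k * ∑ _j ∈ Finset.Icc 1 k, ε / 2 := by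
          gcongr with j hj
          exact hΦ _ (by positivity) (hjδ j hj)
      _ = ε := by rw [Finset.sum_const, Nat.card_Icc, nsmul_eq_mul]; push_cast; field_simp

lemma exists_natCast_mul_inv_factorial {q : ℚ} (hq : 0 ≤ q) {n : ℕ} (hn : q.den ≤ n) :
    ∃ k : ℕ, (k : ℝ) * (n.factorial : ℝ)⁻¹ = q := by
  obtain ⟨m, hm⟩ := Nat.dvd_factorial q.den_pos hn
  have hm0 : (m : ℝ) ≠ 0 := by
    exact_mod_cast right_ne_zero_of_mul (hm ▸ n.factorial_ne_zero)
  have hnum : ((q.num.toNat : ℕ) : ℝ) = q.num := by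
    exact_mod_cast Int.toNat_of_nonneg (Rat.num_nonneg.2 hq)
  refine ⟨q.num.toNat * m, ?_⟩
  rw [hm, Rat.cast_def q, Nat.cast_mul, Nat.cast_mul, hnum, ← div_eq_mul_inv,
    mul_div_mul_right _ _ hm0]

/-- The pairs `(f, β)` that are dominated on all sufficiently fine grids of mesh `1 / n!`; every
rational number lies on these grids from some point on. -/
def majorants (ℓ : ENNReal) (Φ : ℝ → ℝ) : PointedCone ℝ ((ℝ → ℝ) × ℝ) where
  carrier := {z | ∀ᶠ n : ℕ in atTop, z ∈ gridCone ℓ Φ (n.factorial : ℝ)⁻¹}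
  zero_mem' := Eventually.of_forall fun _ => zero_mem _
  add_mem' hz hw := by filter_upwards [hz, hw] with n hzn hwn using add_mem hzn hwn
  smul_mem' c _ hz := by
    filter_upwards [hz] with n hzn using Submodule.smul_mem (gridCone ℓ Φ _) c hzn

lemma majorants_mono {f g : ℝ → ℝ} {β γ : ℝ} (hg : (g, γ) ∈ majorants ℓ Φ) (hfg : f ≤ g)
    (hγβ : γ ≤ β) : (f, β) ∈ majorants ℓ Φ :=
  hg.mono fun _ hn => gridCone_mono hn (fun lam _ => hfg lam) hγβ

lemma add_mem_majorants {f g : ℝ → ℝ} {β γ : ℝ} (hf : (f, β) ∈ majorants ℓ Φ)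
    (hg : (g, γ) ∈ majorants ℓ Φ) : (fun lam => f lam + g lam, β + γ) ∈ majorants ℓ Φ :=
  add_mem hf hg

lemma smul_mem_majorants {f : ℝ → ℝ} {β r : ℝ} (hr : 0 ≤ r) (hf : (f, β) ∈ majorants ℓ Φ) :
    (fun lam => r * f lam, r * β) ∈ majorants ℓ Φ :=
  PointedCone.smul_mem (majorants ℓ Φ) hr hf

lemma mul_cker_mem_majorants {q : ℚ} (hq : InDom (2 * ℓ) q) (r : ℝ) :
    (fun lam => r * cker lam q, r * Φ q) ∈ majorants ℓ Φ := by
  filter_upwards [eventually_ge_atTop q.den] with n hn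
  obtain ⟨k, hk⟩ := exists_natCast_mul_inv_factorial (by exact_mod_cast hq.1) hn
  simpa [hk] using mul_sum_cker_mem_gridCone (Φ := Φ) (h := (n.factorial : ℝ)⁻¹) (s := {k})
    (by simpa [hk] using hq) r

lemma exists_forall_le_of_continuousOn (hℓ : 0 < ℓ) (hΦc : ContinuousOn Φ {t | InDom ℓ t})
    {ε : ℝ} (hε : Φ 0 < ε) : ∃ δ > 0, InDom ℓ δ ∧ ∀ s, 0 ≤ s → s ≤ δ → Φ s ≤ ε := by
  have hzero : InDom ℓ 0 := ⟨le_rfl, by simpa using hℓ⟩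
  obtain ⟨u, hu0, hu⟩ := hzero.exists_gt
  obtain ⟨η, hη, hball⟩ := Metric.mem_nhdsWithin_iff.1
    ((hΦc 0 hzero).eventually_lt_const hε)
  have hδ : 0 < min u (η / 2) := lt_min hu0 (half_pos hη)
  have hδdom : InDom ℓ (min u (η / 2)) := hu.mono hδ.le (min_le_left _ _)
  refine ⟨_, hδ, hδdom, fun s hs hsδ => le_of_lt (hball ⟨?_, hδdom.mono hs hsδ⟩)⟩
  rw [mem_ball_zero_iff, norm_of_nonneg hs]
  exact (hsδ.trans (min_le_right _ _)).trans_lt (half_lt_self hη)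

lemma exists_indicator_Ioi_inv_mem_majorants (hℓ : 0 < ℓ)
    (hΦc : ContinuousOn Φ {t | InDom (2 * ℓ) t}) (hΦ0 : Φ 0 = 0) {ε : ℝ} (hε : 0 < ε) :
    ∃ R > 0, ((Ioi R).indicator (·⁻¹), ε) ∈ majorants ℓ Φ := by
  obtain ⟨δ, hδ, hδdom, hΦδ⟩ := exists_forall_le_of_continuousOn
    (ENNReal.mul_pos two_ne_zero hℓ.ne') hΦc (hΦ0.trans_lt (half_pos hε))
  have hmesh : Tendsto (fun n : ℕ => (n.factorial : ℝ)⁻¹) atTop (𝓝 0) :=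
    tendsto_inv_atTop_zero.comp
      (tendsto_natCast_atTop_atTop.comp (tendsto_atTop_mono Nat.self_le_factorial tendsto_id))
  refine ⟨(2 * π / δ) ^ 2, by positivity, ?_⟩
  filter_upwards [hmesh.eventually_le_const (half_pos hδ)] with n hn
  exact indicator_inv_mem_gridCone hδdom hΦδ (by positivity) (by linarith)

lemma exists_indicator_Iic_mem_majorants (hℓ : 0 < ℓ) (R : ℝ) :
    ∃ β, ((Iic R).indicator 1, β) ∈ majorants ℓ Φ := by
  have hzero : InDom (2 * ℓ) 0 := ⟨le_rfl, by simpa using hℓ⟩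
  obtain ⟨u, hu0, hu⟩ := hzero.exists_gt
  obtain ⟨q, hq0, hq⟩ := exists_rat_btwn
    (lt_min hu0 (show 0 < π / (1 + |R|) by positivity))
  have hqdom : InDom (2 * ℓ) q := hu.mono hq0.le (hq.le.trans (min_le_left _ _))
  have hR : R ≤ (π / q) ^ 2 := by
    have hle : 1 + |R| ≤ π / q := (le_div_comm₀ (by positivity) hq0).2
      (hq.le.trans (min_le_right _ _))
    nlinarith [le_abs_self R, abs_nonneg R]
  refine ⟨_, majorants_mono (mul_cker_mem_majorants hqdom (2 * (q / π) ^ 2)⁻¹)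
    (indicator_le' (fun lam hlam => ?_) fun lam _ => ?_) le_rfl⟩
  · rw [Pi.one_apply, inv_mul_eq_div, one_le_div (by positivity)]
    exact two_mul_sq_le_cker hq0 (le_trans hlam hR)
  · exact mul_nonneg (by positivity) (cker_nonneg _ _)

lemma exists_indicator_Iio_cker_mem_majorants {q : ℚ} (hq : InDom (2 * ℓ) q) {ε : ℝ}
    (hε : 0 < ε) : ∃ N, ((Iio (-N)).indicator (cker · q), ε) ∈ majorants ℓ Φ := by
  obtain ⟨q', hqq', hq'⟩ := hq.exists_rat_gt
  set d : ℝ := (q' - q) ^ 2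
  have : 0 < d := pow_pos (sub_pos.2 hqq') 2
  set N : ℝ := |4 / d * Φ q'| / ε + 1
  have hN : 0 < N := by positivity
  refine ⟨N, majorants_mono (mul_cker_mem_majorants hq' (4 / d / N))
    (indicator_le' (fun lam hlam => ?_) fun lam _ => ?_) ?_⟩
  · have hgrowth := neg_mul_sq_mul_cker_le lam hq.1 hqq'.le
    have hNlam : N ≤ -lam := (lt_neg.1 hlam).le
    rw [div_div, div_mul_eq_mul_div, le_div_iff₀ (by positivity)]
    calc cker lam q * (d * N) = N * d * cker lam q := by ring
      _ ≤ -lam * d * cker lam q := by gcongr; exact cker_nonneg _ _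
      _ ≤ 4 * cker lam q' := hgrowth
  · exact mul_nonneg (by positivity) (cker_nonneg _ _)
  · rw [div_mul_eq_mul_div, div_le_iff₀ hN]
    calc 4 / d * Φ q' ≤ |4 / d * Φ q'| := le_abs_self _
      _ ≤ ε * N := by rw [mul_add, mul_div_cancel₀ _ hε.ne']; linarith

lemma indicator_compl_Icc_cker_le {R : ℝ} (hR : 0 < R) (N t lam : ℝ) :
    (Icc (-N) R)ᶜ.indicator (cker · t) lam ≤
      (Iio (-N)).indicator (cker · t) lam + 2 * (Ioi R).indicator (·⁻¹) lam := by
  have hleft : 0 ≤ (Iio (-N)).indicator (cker · t) lam :=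
    indicator_nonneg (fun x _ => cker_nonneg x t) lam
  have hright : 0 ≤ 2 * (Ioi R).indicator (·⁻¹) lam :=
    mul_nonneg zero_le_two (indicator_nonneg (fun x hx => inv_nonneg.2 (hR.trans hx).le) lam)
  refine indicator_apply_le' (fun hlam => ?_) fun _ => add_nonneg hleft hright
  rcases not_and_or.1 hlam with hlam | hlam
  · refine le_add_of_le_of_nonneg ?_ hright
    rw [indicator_of_mem (mem_Iio.2 (not_le.1 hlam))]
  · refine le_add_of_nonneg_of_le hleft ?_
    rw [indicator_of_mem (mem_Ioi.2 (not_le.1 hlam)), ← div_eq_mul_inv,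
      le_div_iff₀ (hR.trans (not_le.1 hlam)), mul_comm]
    exact mul_cker_le_two lam t

lemma exists_isCompact_indicator_compl_cker_mem_majorants (hℓ : 0 < ℓ)
    (hΦc : ContinuousOn Φ {t | InDom (2 * ℓ) t}) (hΦ0 : Φ 0 = 0) {q : ℚ}
    (hq : InDom (2 * ℓ) q) {ε : ℝ} (hε : 0 < ε) :
    ∃ K, IsCompact K ∧ (Kᶜ.indicator (cker · q), ε) ∈ majorants ℓ Φ := by
  obtain ⟨N, hN⟩ := exists_indicator_Iio_cker_mem_majorants (Φ := Φ) hq (half_pos hε)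
  obtain ⟨R, hR0, hR⟩ := exists_indicator_Ioi_inv_mem_majorants hℓ hΦc hΦ0
    (show 0 < ε / 4 by positivity)
  exact ⟨Icc (-N) R, isCompact_Icc,
    majorants_mono (add_mem_majorants hN (smul_mem_majorants zero_le_two hR))
      (indicator_compl_Icc_cker_le hR0 N q) (by linarith)⟩

theorem isMajorantCone_majorants (hℓ : 0 < ℓ) (hΦ0 : Φ 0 = 0) (hΦ : IsKreinPosDef ℓ Φ) :
    IsMajorantCone (majorants ℓ Φ) where
  mono := majorants_mono
  nonneg hβ := by
    obtain ⟨n, a, ha, hpos, hle⟩ := hβ.exists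
    exact (gridEval_nonneg hΦ hΦ0 (by positivity) ha hpos).trans hle
  exists_majorant f := by
    obtain ⟨M, hM⟩ := f.continuous.bounded_above_of_compact_support f.hasCompactSupport
    obtain ⟨R, hR⟩ := f.hasCompactSupport.isCompact.bddAbove
    obtain ⟨β, hβ⟩ := exists_indicator_Iic_mem_majorants (Φ := Φ) hℓ R
    have hM0 : 0 ≤ M := (norm_nonneg _).trans (hM 0)
    refine ⟨M * β, majorants_mono (smul_mem_majorants hM0 hβ) (fun lam => ?_) le_rfl⟩
    by_cases hlam : lam ≤ R
    · simpa [hlam] using (le_abs_self _).trans (hM lam)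
    · have hzero : f lam = 0 := image_eq_zero_of_notMem_tsupport fun hmem => hlam (hR hmem)
      simp [hlam, hzero]

end Majorants

section Representation

open Filter Topology
open scoped CompactlySupported

variable {ℓ : ENNReal} {Φ : ℝ → ℝ}

lemma integrable_cker_and_integral_eq_of_rat (hℓ : 0 < ℓ)
    (hΦc : ContinuousOn Φ {t | InDom (2 * ℓ) t}) (hΦ0 : Φ 0 = 0) (hΦ : IsKreinPosDef ℓ Φ)
    {τ : Measure ℝ} [IsFiniteMeasureOnCompacts τ]
    (hτ : ∀ (f : C_c(ℝ, ℝ)) (β : ℝ), (⇑f, β) ∈ majorants ℓ Φ → ∫ lam, f lam ∂τ ≤ β)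
    {q : ℚ} (hq : InDom (2 * ℓ) q) :
    Integrable (cker · q) τ ∧ ∫ lam, cker lam q ∂τ = Φ q := by
  have hcone := isMajorantCone_majorants hℓ hΦ0 hΦ
  have hcont : Continuous (cker · q) := continuous_cker_left q
  have hnonneg : 0 ≤ (cker · q) := fun lam => cker_nonneg lam q
  have hle : ((cker · q), Φ q) ∈ majorants ℓ Φ := by
    simpa only [one_mul] using mul_cker_mem_majorants (Φ := Φ) hq 1
  have hge : (-(cker · q), -Φ q) ∈ majorants ℓ Φ :=
    majorants_mono (mul_cker_mem_majorants hq (-1)) (fun lam => (neg_one_mul (cker lam q)).ge)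
      (neg_one_mul (Φ q)).le
  exact ⟨(hcone.integrable_and_integral_le hτ hcont hnonneg hle).1,
    hcone.integral_eq hτ hcont hnonneg hle hge fun ε hε =>
      exists_isCompact_indicator_compl_cker_mem_majorants hℓ hΦc hΦ0 hq hε⟩

lemma integrable_inv_one_add_abs (hℓ : 0 < ℓ)
    (hΦc : ContinuousOn Φ {t | InDom (2 * ℓ) t}) (hΦ0 : Φ 0 = 0) (hΦ : IsKreinPosDef ℓ Φ)
    {τ : Measure ℝ} [IsFiniteMeasureOnCompacts τ]
    (hτ : ∀ (f : C_c(ℝ, ℝ)) (β : ℝ), (⇑f, β) ∈ majorants ℓ Φ → ∫ lam, f lam ∂τ ≤ β) :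
    Integrable (fun lam => (1 + |lam|)⁻¹) τ := by
  obtain ⟨R, hR0, hR⟩ := exists_indicator_Ioi_inv_mem_majorants hℓ hΦc hΦ0 one_pos
  obtain ⟨β, hβ⟩ := exists_indicator_Iic_mem_majorants (Φ := Φ) hℓ R
  have hcont : Continuous fun lam : ℝ => (1 + |lam|)⁻¹ :=
    (continuous_const.add continuous_abs).inv₀ fun lam =>
      (add_pos_of_pos_of_nonneg one_pos (abs_nonneg lam)).ne'
  refine ((isMajorantCone_majorants hℓ hΦ0 hΦ).integrable_and_integral_le hτ hcont
    (fun lam => by positivity)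
    (majorants_mono (add_mem_majorants hβ hR) (fun lam => ?_) le_rfl)).1
  rcases le_or_gt lam R with hlam | hlam
  · rw [indicator_of_mem (mem_Iic.2 hlam), indicator_of_notMem (notMem_Ioi.2 hlam), add_zero]
    exact inv_le_one_of_one_le₀ (le_add_of_nonneg_right (abs_nonneg lam))
  · rw [indicator_of_notMem (notMem_Iic.2 hlam), indicator_of_mem (mem_Ioi.2 hlam), zero_add]
    have hpos : 0 < lam := hR0.trans hlam
    gcongr
    linarith [le_abs_self lam]

lemma norm_cker_le {s t : ℝ} (lam : ℝ) (hs : 0 ≤ s) (hst : s ≤ t) :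
    ‖cker lam s‖ ≤ cker lam t + (t ^ 2 / 2 + 2) * (1 + |lam|)⁻¹ := by
  rw [Real.norm_of_nonneg (cker_nonneg lam s)]
  exact cker_le_cker_add_mul_inv lam hs hst

lemma integrable_cker_of_le {τ : Measure ℝ} (hτ : Integrable (fun lam => (1 + |lam|)⁻¹) τ)
    {s t : ℝ} (hs : 0 ≤ s) (hst : s ≤ t) (ht : Integrable (cker · t) τ) :
    Integrable (cker · s) τ :=
  (ht.add (hτ.const_mul _)).mono' (continuous_cker_left s).aestronglyMeasurable
    (ae_of_all _ fun lam => norm_cker_le lam hs hst)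

lemma continuousOn_integral_cker {τ : Measure ℝ} (hτ : Integrable (fun lam => (1 + |lam|)⁻¹) τ)
    (hint : ∀ q : ℚ, InDom ℓ q → Integrable (cker · q) τ) :
    ContinuousOn (fun t => ∫ lam, cker lam t ∂τ) {t | InDom ℓ t} := by
  intro t ht
  obtain ⟨q, htq, hq⟩ := ht.exists_rat_gt
  refine continuousWithinAt_of_dominated
    (bound := fun lam => cker lam q + ((q : ℝ) ^ 2 / 2 + 2) * (1 + |lam|)⁻¹)
    (Eventually.of_forall fun s => (continuous_cker_left s).aestronglyMeasurable) ?_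
    ((hint q hq).add (hτ.const_mul _))
    (ae_of_all _ fun lam => (continuous_cker_right lam).continuousWithinAt)
  filter_upwards [self_mem_nhdsWithin, mem_nhdsWithin_of_mem_nhds (Iic_mem_nhds htq)] with s hs hsq
  exact ae_of_all _ fun lam => norm_cker_le lam hs.1 hsq

theorem IsKreinPosDef.exists_measure (hℓ : 0 < ℓ)
    (hΦc : ContinuousOn Φ {t | InDom (2 * ℓ) t}) (hΦ0 : Φ 0 = 0) (hΦ : IsKreinPosDef ℓ Φ) :
    ∃ τ : Measure ℝ, ∀ t, InDom (2 * ℓ) t →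
      Integrable (cker · t) τ ∧ Φ t = ∫ lam, cker lam t ∂τ := by
  obtain ⟨τ, _, hτ⟩ := (isMajorantCone_majorants hℓ hΦ0 hΦ).exists_measure
  have hrat (q : ℚ) (hq : InDom (2 * ℓ) q) :=
    integrable_cker_and_integral_eq_of_rat hℓ hΦc hΦ0 hΦ hτ hq
  have hinv := integrable_inv_one_add_abs hℓ hΦc hΦ0 hΦ hτ
  have hEqOn : EqOn Φ (fun t => ∫ lam, cker lam t ∂τ) {t | InDom (2 * ℓ) t} := by
    refine EqOn.of_subset_closure (s := {t | InDom (2 * ℓ) t} ∩ range ((↑) : ℚ → ℝ)) ?_ hΦc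
      (continuousOn_integral_cker hinv fun q hq => (hrat q hq).1) inter_subset_left
      fun t ht => ht.mem_closure_inter_range_ratCast
    rintro _ ⟨hq, q, rfl⟩
    exact (hrat q hq).2.symm
  refine ⟨τ, fun t ht => ⟨?_, hEqOn ht⟩⟩
  obtain ⟨q, htq, hq⟩ := ht.exists_rat_gt
  exact integrable_cker_of_le hinv ht.1 htq.le (hrat q hq).1

theorem isKreinPosDef_of_eq_integral {τ : Measure ℝ}
    (hΦ : ∀ t, InDom (2 * ℓ) t → Integrable (cker · t) τ ∧ Φ t = ∫ lam, cker lam t ∂τ) :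
    IsKreinPosDef ℓ Φ := by
  intro n t c ht
  let g (i j : Fin n) (lam : ℝ) : ℝ := 2 * (sker lam (t i) * sker lam (t j)) * c i * c j
  have hentry (i j) : Integrable (g i j) τ ∧
      (Φ (t i + t j) - Φ |t i - t j|) * c i * c j = ∫ lam, g i j lam ∂τ := by
    obtain ⟨hadd, hΦadd⟩ := hΦ _ ((ht i).add (ht j))
    obtain ⟨hsub, hΦsub⟩ := hΦ _ ((ht i).abs_sub (ht j))
    simp only [g, ← cker_add_sub_cker_abs_sub, integral_mul_const]
    rw [integral_sub hadd hsub, hΦadd, hΦsub]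
    exact ⟨((hadd.sub hsub).mul_const _).mul_const _, rfl⟩
  have hsquare (lam : ℝ) : ∑ i, ∑ j, g i j lam = 2 * (∑ i, sker lam (t i) * c i) ^ 2 := by
    rw [sq, Finset.sum_mul_sum, Finset.mul_sum]
    simp only [g, Finset.mul_sum]
    exact Finset.sum_congr rfl fun i _ => Finset.sum_congr rfl fun j _ => by ring
  calc 0 ≤ ∫ lam, ∑ i, ∑ j, g i j lam ∂τ :=
        integral_nonneg fun lam => (hsquare lam).symm ▸ by positivity
    _ = ∑ i, ∑ j, ∫ lam, g i j lam ∂τ := by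
        rw [integral_finsetSum _ fun i _ => integrable_finsetSum _ fun j _ => (hentry i j).1]
        exact Finset.sum_congr rfl fun i _ => integral_finsetSum _ fun j _ => (hentry i j).1
    _ = ∑ i, ∑ j, (Φ (t i + t j) - Φ |t i - t j|) * c i * c j := by simp only [hentry]

end Representation

section Complexification

open Finset
open scoped ComplexConjugate

variable {ι : Type*} [Fintype ι]

lemma sum_ofReal_mul_mul_conj {K : ι → ι → ℝ} (hK : ∀ i j, K i j = K j i) (c : ι → ℂ) :
    ∑ i, ∑ j, (K i j : ℂ) * c i * conj (c j) =
      ((∑ i, ∑ j, K i j * (c i).re * (c j).re +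
        ∑ i, ∑ j, K i j * (c i).im * (c j).im : ℝ) : ℂ) := by
  have hcross : ∑ i, ∑ j, K i j * (c i).re * (c j).im = ∑ i, ∑ j, K i j * (c i).im * (c j).re := by
    rw [sum_comm]
    exact sum_congr rfl fun i _ => sum_congr rfl fun j _ => by rw [hK j i]; ring
  apply Complex.ext
  · simp only [Complex.re_sum, Complex.ofReal_re, ← sum_add_distrib]
    exact sum_congr rfl fun i _ => sum_congr rfl fun j _ => by simp
  · rw [Complex.ofReal_im, ← sub_eq_zero.2 hcross.symm]
    simp only [Complex.im_sum, ← sum_sub_distrib]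
    exact sum_congr rfl fun i _ => sum_congr rfl fun j _ => by simp; ring

lemma isKreinPosDef_iff {ℓ : ENNReal} {Φ : ℝ → ℝ} :
    IsKreinPosDef ℓ Φ ↔ ∀ (n : ℕ) (t : Fin n → ℝ) (c : Fin n → ℂ), (∀ i, InDom ℓ (t i)) →
      0 ≤ (∑ i, ∑ j, ((Φ (t i + t j) - Φ |t i - t j| : ℝ) : ℂ) * c i * conj (c j)).re ∧
      (∑ i, ∑ j, ((Φ (t i + t j) - Φ |t i - t j| : ℝ) : ℂ) * c i * conj (c j)).im = 0 := by
  have hsymm {n : ℕ} (t : Fin n → ℝ) (i j) :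
      Φ (t i + t j) - Φ |t i - t j| = Φ (t j + t i) - Φ |t j - t i| := by
    rw [add_comm, abs_sub_comm]
  constructor
  · intro hΦ n t c ht
    rw [sum_ofReal_mul_mul_conj (hsymm t), Complex.ofReal_re, Complex.ofReal_im]
    exact ⟨add_nonneg (hΦ n t _ ht) (hΦ n t _ ht), rfl⟩
  · intro hΦ n t c ht
    have hre := (hΦ n t (fun i => c i) ht).1
    rw [sum_ofReal_mul_mul_conj (hsymm t)] at hre
    simpa using hre

end Complexification

end Krein

/-- **Krein's representation criterion** (Statement 2.4°). A continuous function
`Φ : [0,2ℓ) → ℝ` with `Φ(0) = 0` admits a representation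
`Φ(t) = ∫_ℝ c(λ,t) dτ(λ)` with some measure `τ` if and only if the kernel
`K_Φ(s,t) = Φ(t+s) - Φ(|t-s|)`, `0 ≤ s,t < ℓ`, is positive definite. -/
theorem krein_representation_criterion
    (ℓ : ENNReal) (hℓ : 0 < ℓ)
    (Φ : ℝ → ℝ) (hΦc : ContinuousOn Φ {t : ℝ | InDom (2 * ℓ) t}) (hΦ0 : Φ 0 = 0) :
    (∃ τ : Measure ℝ, ∀ t : ℝ, InDom (2 * ℓ) t →
        Integrable (fun lam : ℝ => cker lam t) τ ∧ Φ t = ∫ lam : ℝ, cker lam t ∂τ) ↔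
    (∀ (n : ℕ) (t : Fin n → ℝ) (c : Fin n → ℂ), (∀ i, InDom ℓ (t i)) →
        0 ≤ (∑ i, ∑ j, ((Φ (t i + t j) - Φ |t i - t j| : ℝ) : ℂ) *
              c i * (starRingEnd ℂ) (c j)).re ∧
        (∑ i, ∑ j, ((Φ (t i + t j) - Φ |t i - t j| : ℝ) : ℂ) *
              c i * (starRingEnd ℂ) (c j)).im = 0) := by
  rw [← Krein.isKreinPosDef_iff]
  exact ⟨fun ⟨_, hτ⟩ => Krein.isKreinPosDef_of_eq_integral hτ,
    Krein.IsKreinPosDef.exists_measure hℓ hΦc hΦ0⟩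
end

section
/- Screw functions have positive definite difference kernels: Let τ be a Borel measure on ℝ with ∫_ℝ dτ(λ)/(1+λ²) < ∞, let α ∈ ℝ and β ∈ ℝ, and define g(t) := α + iβt + ∫_ℝ e(λ,t) dτ(λ) for t ∈ ℝ, where e(λ,t) := (e^{iλt} − 1 − iλt/(1+λ²))/λ² for λ ≠ 0 and e(0,t) := −t²/2. Then g : ℝ → ℂ is continuous and the kernel G_g(s,t) := g(s−t) − g(s) − conj(g(t)) + g(0), s,t ∈ ℝ, is positive definite, i.e. for all n ∈ ℕ, t₁,…,t_n ∈ ℝ and c₁,…,c_n ∈ ℂ one has ∑_{i,j=1}^n G_g(t_i,t_j)·c_i·conj(c_j) ≥ 0. -/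
open MeasureTheory Set

/-- The kernel `e(λ,t) = (e^{iλt} - 1 - iλt/(1+λ²))/λ²` for `λ ≠ 0`,
and `e(0,t) = -t²/2`. -/
noncomputable def eker (lam t : ℝ) : ℂ :=
  if lam = 0 then -(t ^ 2) / 2
  else (Complex.exp (Complex.I * lam * t) - 1 -
          Complex.I * lam * t / (1 + (lam : ℂ) ^ 2)) / (lam : ℂ) ^ 2

/-!
Since `(1+λ²) e(λ,t) = (e^{iλt} - 1 - iλt)/λ² + (e^{iλt} - 1)` is bounded in `λ`, locally uniformly
in `t`, dominated convergence gives the continuity of `g`. The map `g ↦ G_g` is real-linear, kills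
`α + iβt`, and commutes with integration, so it suffices to compute it on `e(λ,·)`. There it
factors: `G_{e(λ,·)}(s,t) = φ(λ,s) conj φ(λ,t)` with `φ(λ,t) = (e^{iλt} - 1)/λ`. Hence
`G_g(s,t)` is the inner product in `L²(τ)` of `φ(·,s)` and `φ(·,t)`, and Gram matrices are
positive semidefinite.
-/

open Complex Filter
open scoped ComplexConjugate ComplexOrder InnerProductSpace Topology

section Analysis

lemma norm_exp_I_mul_ofReal_sub_one_sub_le (x : ℝ) :
    ‖exp (I * x) - 1 - I * x‖ ≤ x ^ 2 := by
  have hderiv (y : ℝ) :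
      HasDerivAt (fun y : ℝ => exp (I * y) - 1 - I * y) (I * (exp (I * y) - 1)) y := by
    have hmul : HasDerivAt (fun y : ℝ => I * (y : ℂ)) I y := by
      simpa using (hasDerivAt_id y).ofReal_comp.const_mul I
    exact ((hmul.cexp.sub_const 1).sub hmul).congr_deriv (by ring)
  have hbound (y : ℝ) (hy : y ∈ uIcc 0 x) : ‖I * (exp (I * y) - 1)‖ ≤ |x| := by
    rw [norm_mul, norm_I, one_mul]
    exact Real.norm_exp_I_mul_ofReal_sub_one_le.trans
      (by simpa using abs_sub_left_of_mem_uIcc hy)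
  have hmvt := (convex_uIcc 0 x).norm_image_sub_le_of_norm_hasDerivWithin_le
    (fun y _ => (hderiv y).hasDerivWithinAt) hbound left_mem_uIcc right_mem_uIcc
  simpa [← sq] using hmvt

lemma continuous_integral_of_norm_le_mul {X α E : Type*} [TopologicalSpace X]
    [FirstCountableTopology X] [MeasurableSpace α] {μ : Measure α} [NormedAddCommGroup E]
    [NormedSpace ℝ E] {F : X → α → E} {C : X → ℝ} {bound : α → ℝ}
    (hF_meas : ∀ x, AEStronglyMeasurable (F x) μ)
    (hF_le : ∀ x, ∀ᵐ a ∂μ, ‖F x a‖ ≤ C x * bound a) (hC : Continuous C)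
    (hbound : Integrable bound μ) (hF_cont : ∀ᵐ a ∂μ, Continuous fun x => F x a) :
    Continuous fun x => ∫ a, F x a ∂μ := by
  refine continuous_iff_continuousAt.2 fun x₀ => ?_
  have hC_le : ∀ᶠ x in 𝓝 x₀, |C x| ≤ |C x₀| + 1 :=
    (hC.abs.tendsto x₀).eventually_le_const (lt_add_one _)
  refine continuousAt_of_dominated (Eventually.of_forall hF_meas) ?_
    (hbound.abs.const_mul (|C x₀| + 1)) (hF_cont.mono fun _ h => h.continuousAt)
  filter_upwards [hC_le] with x hx
  filter_upwards [hF_le x] with a ha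
  calc ‖F x a‖ ≤ |C x * bound a| := ha.trans (le_abs_self _)
    _ = |C x| * |bound a| := abs_mul _ _
    _ ≤ (|C x₀| + 1) * |bound a| := by gcongr

end Analysis

section PosSemidef

variable {𝕜 ι : Type*} [RCLike 𝕜]

lemma posSemidef_of_integral_inner [Finite ι] {α E : Type*} [MeasurableSpace α] {μ : Measure α}
    [NormedAddCommGroup E] [InnerProductSpace 𝕜 E] {f : ι → α → E} (hf : ∀ i, MemLp (f i) 2 μ) :
    (Matrix.of fun i j => ∫ a, ⟪f i a, f j a⟫_𝕜 ∂μ).PosSemidef := by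
  have hgram : (Matrix.of fun i j => ∫ a, ⟪f i a, f j a⟫_𝕜 ∂μ) =
      Matrix.gram 𝕜 fun i => (hf i).toLp (f i) := by
    ext i j
    refine integral_congr_ae ?_
    filter_upwards [(hf i).coeFn_toLp, (hf j).coeFn_toLp] with a hi hj
    rw [hi, hj]
  exact hgram ▸ Matrix.posSemidef_gram 𝕜 _

lemma sum_mul_mul_conj_nonneg_of_posSemidef [Fintype ι] {M : Matrix ι ι 𝕜}
    (hM : M.PosSemidef) (c : ι → 𝕜) : 0 ≤ ∑ i, ∑ j, M i j * c i * conj (c j) := by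
  have h := hM.dotProduct_mulVec_nonneg (star c)
  simp only [dotProduct, Matrix.mulVec, Finset.mul_sum, star_star, Pi.star_apply] at h
  refine h.trans_eq (Finset.sum_congr rfl fun i _ => Finset.sum_congr rfl fun j _ => ?_)
  rw [starRingEnd_apply]
  ring

end PosSemidef

section DifferenceKernel

variable {G 𝕜 : Type*} [AddGroup G] [RCLike 𝕜]

/-- The kernel `G_g(s,t) = g(s-t) - g(s) - conj(g(t)) + g(0)` attached to a function `g` on an
additive group. -/
def differenceKernel (g : G → 𝕜) (s t : G) : 𝕜 :=
  g (s - t) - g s - conj (g t) + g 0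

lemma differenceKernel_add (f g : G → 𝕜) (s t : G) :
    differenceKernel (f + g) s t = differenceKernel f s t + differenceKernel g s t := by
  simp only [differenceKernel, Pi.add_apply, map_add]
  ring

lemma differenceKernel_affine (α β s t : ℝ) :
    differenceKernel (fun u : ℝ => (α : ℂ) + I * β * u) s t = 0 := by
  simp only [differenceKernel, map_add, map_mul, conj_I, conj_ofReal, ofReal_sub, ofReal_zero]
  ring

variable {α : Type*} [MeasurableSpace α] {μ : Measure α} {f : α → G → 𝕜}

lemma integrable_conj {h : α → 𝕜} (hh : Integrable h μ) : Integrable (fun a => conj (h a)) μ :=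
  RCLike.conjCLE.integrable_comp_iff.2 hh

lemma integrable_differenceKernel (hf : ∀ t, Integrable (f · t) μ) (s t : G) :
    Integrable (fun a => differenceKernel (f a) s t) μ :=
  (((hf _).sub (hf _)).sub (integrable_conj (hf _))).add (hf _)

lemma differenceKernel_integral (hf : ∀ t, Integrable (f · t) μ) (s t : G) :
    differenceKernel (fun u => ∫ a, f a u ∂μ) s t = ∫ a, differenceKernel (f a) s t ∂μ := by
  have hsub : Integrable (fun a => f a (s - t) - f a s) μ := (hf _).sub (hf _)
  have hconj : Integrable (fun a => conj (f a t)) μ := integrable_conj (hf t)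
  have hsub_conj : Integrable (fun a => f a (s - t) - f a s - conj (f a t)) μ := hsub.sub hconj
  simp only [differenceKernel]
  rw [integral_add hsub_conj (hf 0), integral_sub hsub hconj, integral_sub (hf _) (hf _),
    integral_conj]

end DifferenceKernel

section ScrewKernel

lemma one_add_ofReal_sq_ne_zero (x : ℝ) : 1 + (x : ℂ) ^ 2 ≠ 0 := by
  exact_mod_cast (by positivity : 1 + x ^ 2 ≠ 0)

lemma one_add_sq_mul_eker {lam : ℝ} (hlam : lam ≠ 0) (t : ℝ) :
    (1 + (lam : ℂ) ^ 2) * eker lam t =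
      (exp (I * lam * t) - 1 - I * lam * t) / lam ^ 2 + (exp (I * lam * t) - 1) := by
  have hlam' : (lam : ℂ) ≠ 0 := ofReal_ne_zero.2 hlam
  have hden := one_add_ofReal_sq_ne_zero lam
  rw [eker, if_neg hlam]
  field_simp
  ring

lemma norm_one_add_sq_mul_eker_le (lam t : ℝ) :
    ‖(1 + (lam : ℂ) ^ 2) * eker lam t‖ ≤ t ^ 2 + 2 := by
  rcases eq_or_ne lam 0 with rfl | hlam
  · have hzero : ‖(1 + ((0 : ℝ) : ℂ) ^ 2) * eker 0 t‖ = t ^ 2 / 2 := by simp [eker]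
    rw [hzero]
    linarith [sq_nonneg t]
  · have hexp : I * lam * t = I * ((lam * t : ℝ) : ℂ) := by push_cast; ring
    rw [one_add_sq_mul_eker hlam, hexp]
    refine (norm_add_le _ _).trans (add_le_add ?_ ?_)
    · rw [norm_div, norm_pow, norm_real, Real.norm_eq_abs, sq_abs,
        div_le_iff₀ (by positivity), ← mul_pow, mul_comm t]
      exact norm_exp_I_mul_ofReal_sub_one_sub_le _
    · calc ‖exp (I * ((lam * t : ℝ) : ℂ)) - 1‖
          ≤ ‖exp (I * ((lam * t : ℝ) : ℂ))‖ + ‖(1 : ℂ)‖ := norm_sub_le _ _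
        _ = 2 := by rw [norm_exp_I_mul_ofReal, norm_one]; norm_num

lemma norm_eker_le (lam t : ℝ) : ‖eker lam t‖ ≤ (t ^ 2 + 2) * (1 / (1 + lam ^ 2)) := by
  have hnorm : ‖1 + (lam : ℂ) ^ 2‖ = 1 + lam ^ 2 := by
    exact_mod_cast Complex.norm_of_nonneg (by positivity : 0 ≤ 1 + lam ^ 2)
  rw [mul_one_div, le_div_iff₀' (by positivity), ← hnorm, ← norm_mul]
  exact norm_one_add_sq_mul_eker_le lam t

lemma measurable_eker (t : ℝ) : Measurable (eker · t) := by
  unfold eker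
  exact Measurable.ite (measurableSet_singleton 0) measurable_const (by fun_prop)

lemma continuous_eker (lam : ℝ) : Continuous (eker lam) := by
  unfold eker
  split_ifs <;> fun_prop

variable {τ : Measure ℝ}

lemma integrable_eker (hτ : Integrable (fun lam : ℝ => 1 / (1 + lam ^ 2)) τ) (t : ℝ) :
    Integrable (eker · t) τ :=
  (hτ.const_mul (t ^ 2 + 2)).mono' (measurable_eker t).aestronglyMeasurable
    (Eventually.of_forall (norm_eker_le · t))

lemma continuous_integral_eker (hτ : Integrable (fun lam : ℝ => 1 / (1 + lam ^ 2)) τ) :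
    Continuous fun t => ∫ lam, eker lam t ∂τ :=
  continuous_integral_of_norm_le_mul (fun t => (measurable_eker t).aestronglyMeasurable)
    (fun t => Eventually.of_forall (norm_eker_le · t)) (by fun_prop) hτ
    (Eventually.of_forall continuous_eker)

/-- The function `φ(λ,t) = (e^{iλt} - 1)/λ`, extended by its limit `it` to `λ = 0`; the difference
kernel of `e(λ,·)` is the rank-one kernel `φ(λ,s) conj φ(λ,t)`. -/
noncomputable def screwFactor (lam t : ℝ) : ℂ :=
  if lam = 0 then I * t else (exp (I * lam * t) - 1) / lam

lemma measurable_screwFactor (t : ℝ) : Measurable (screwFactor · t) := by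
  unfold screwFactor
  exact Measurable.ite (measurableSet_singleton 0) measurable_const (by fun_prop)

lemma differenceKernel_eker (lam s t : ℝ) :
    differenceKernel (eker lam) s t = ⟪screwFactor lam t, screwFactor lam s⟫_ℂ := by
  rw [RCLike.inner_apply]
  unfold differenceKernel eker screwFactor
  split_ifs with hlam
  · simp only [map_div₀, map_neg, map_pow, map_mul, map_ofNat, conj_I, conj_ofReal, ofReal_sub,
      ofReal_zero]
    linear_combination (s * t : ℂ) * I_sq
  · have hlam' : (lam : ℂ) ≠ 0 := ofReal_ne_zero.2 hlam
    have hden := one_add_ofReal_sq_ne_zero lam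
    have hexp : exp (I * lam * (s - t : ℝ)) = exp (I * lam * s) * exp (-(I * lam * t)) := by
      rw [← exp_add]
      push_cast
      ring_nf
    rw [hexp]
    simp only [map_div₀, map_sub, map_mul, map_pow, map_add, map_one, ← exp_conj, conj_I,
      conj_ofReal, neg_mul, ofReal_zero, mul_zero, exp_zero, ofReal_sub]
    field_simp
    ring

lemma memLp_screwFactor (hτ : Integrable (fun lam : ℝ => 1 / (1 + lam ^ 2)) τ) (t : ℝ) :
    MemLp (screwFactor · t) 2 τ := by
  rw [memLp_two_iff_integrable_sq_norm (measurable_screwFactor t).aestronglyMeasurable]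
  have hdiag : Integrable (fun lam => differenceKernel (eker lam) t t) τ :=
    integrable_differenceKernel (integrable_eker hτ) t t
  simp only [differenceKernel_eker] at hdiag
  simpa only [inner_self_eq_norm_sq] using hdiag.re

lemma posSemidef_differenceKernel_integral_eker {ι : Type*} [Finite ι]
    (hτ : Integrable (fun lam : ℝ => 1 / (1 + lam ^ 2)) τ) (t : ι → ℝ) :
    (Matrix.of fun i j =>
      differenceKernel (fun u => ∫ lam, eker lam u ∂τ) (t i) (t j)).PosSemidef := by
  simp only [differenceKernel_integral (integrable_eker hτ), differenceKernel_eker]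
  exact (posSemidef_of_integral_inner fun i => memLp_screwFactor hτ (t i)).transpose

end ScrewKernel

/-- **Screw functions have positive definite difference kernels.**
If `g(t) = α + iβt + ∫_ℝ e(λ,t) dτ(λ)` with `∫ dτ(λ)/(1+λ²) < ∞`, then `g` is
continuous and the kernel `G_g(s,t) = g(s-t) - g(s) - conj(g(t)) + g(0)` is
positive definite. -/
theorem screw_function_kernel_posdef
    (τ : Measure ℝ)
    (hτ : ∫⁻ lam : ℝ, ENNReal.ofReal (1 / (1 + lam ^ 2)) ∂τ < ⊤)
    (α β : ℝ)
    (g : ℝ → ℂ)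
    (hg : ∀ t : ℝ, g t = (α : ℂ) + Complex.I * β * t + ∫ lam : ℝ, eker lam t ∂τ) :
    Continuous g ∧
    ∀ (n : ℕ) (t : Fin n → ℝ) (c : Fin n → ℂ),
      0 ≤ (∑ i, ∑ j, (g (t i - t j) - g (t i) - (starRingEnd ℂ) (g (t j)) + g 0) *
            c i * (starRingEnd ℂ) (c j)).re ∧
      (∑ i, ∑ j, (g (t i - t j) - g (t i) - (starRingEnd ℂ) (g (t j)) + g 0) *
            c i * (starRingEnd ℂ) (c j)).im = 0 := by
  have hint : Integrable (fun lam : ℝ => 1 / (1 + lam ^ 2)) τ :=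
    (lintegral_ofReal_ne_top_iff_integrable (Measurable.aestronglyMeasurable (by fun_prop))
      (Eventually.of_forall fun lam => by positivity)).1 hτ.ne
  have hg_eq : g = (fun t : ℝ => (α : ℂ) + I * β * t) + fun t => ∫ lam, eker lam t ∂τ := funext hg
  refine ⟨?_, fun n t c => ?_⟩
  · rw [hg_eq]
    exact Continuous.add (by fun_prop) (continuous_integral_eker hint)
  · have hker : (Matrix.of fun i j => differenceKernel g (t i) (t j)).PosSemidef := by
      simpa only [hg_eq, differenceKernel_add, differenceKernel_affine, zero_add] using
        posSemidef_differenceKernel_integral_eker hint t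
    obtain ⟨hre, him⟩ := nonneg_iff.1 (sum_mul_mul_conj_nonneg_of_posSemidef hker c)
    exact ⟨hre, him.symm⟩
end

section
/- Laplace transform of the transfer function (relation (2.11)): Let κ ≥ 0 and let τ be a Borel measure on ℝ supported in [−κ²,∞) with ∫_ℝ dτ(λ)/(1+|λ|) < ∞. Then Φ_τ(t) := ∫_ℝ c(λ,t) dτ(λ) is finite for every t ≥ 0, there exist constants C > 0 such that |Φ_τ(t)| ≤ C·e^{κ t}·(1+t²) for t ≥ 0, and for every z ∈ ℂ with Im z > κ one has ∫₀^∞ e^{izt} Φ_τ(t) dt = (i/z)·∫_ℝ dτ(λ)/(λ − z²), all integrals converging absolutely. -/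
/-!
Whatever the sign of `λ`, the kernel `c(λ, ·)` is the solution of `u'' + λ u = 1` with
`u(0) = u'(0) = 0`. Transforming the equation gives `(a² + λ) ∫₀^∞ e^{at} c(λ,t) dt = -1/a`, which
for `a = iz` is the theorem for a point mass. For `λ ≥ -κ²` we have `|u''| ≤ e^{κt}`; integrating
this twice bounds `|c(λ,t)|` by `t² e^{κt}`, while the equation itself bounds `|λ c(λ,t)|` by
`2 e^{κt}`. Together they give the decay of order `1/(1 + |λ|)` that makes Fubini's theorem
applicable.
-/

open MeasureTheory Set

theorem sigmaFinite_of_lintegral_ne_top {α : Type*} [MeasurableSpace α] {μ : Measure α}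
    {f : α → ENNReal} (hf : AEMeasurable f μ) (hf₀ : ∀ᵐ x ∂μ, f x ≠ 0)
    (hfμ : ∫⁻ x, f x ∂μ ≠ ⊤) : SigmaFinite μ := by
  have hf_top : ∀ᵐ x ∂μ, f x ≠ ⊤ := (ae_lt_top' hf hfμ).mono fun _ hx ↦ hx.ne
  have : IsFiniteMeasure (μ.withDensity f) := isFiniteMeasure_withDensity hfμ
  rw [← withDensity_inv_same₀ hf hf₀ hf_top]
  refine SigmaFinite.withDensity_of_ne_top ?_
  filter_upwards [withDensity_absolutelyContinuous μ f hf₀] with x hx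
  exact ENNReal.inv_ne_top.2 hx

theorem exists_sq_eq_or_eq_zero_or_eq_neg_sq (r : ℝ) :
    (∃ x, 0 < x ∧ r = x ^ 2) ∨ r = 0 ∨ ∃ x, 0 < x ∧ r = -x ^ 2 := by
  rcases lt_trichotomy r 0 with hr | hr | hr
  · exact .inr (.inr ⟨√(-r), by simpa, by rw [Real.sq_sqrt] <;> linarith⟩)
  · exact .inr (.inl hr)
  · exact .inl ⟨√r, by simpa, (Real.sq_sqrt hr.le).symm⟩

section ExponentialWeight

theorem integrableOn_exp_mul_one_add_sq {b : ℝ} (hb : b < 0) :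
    IntegrableOn (fun t : ℝ ↦ Real.exp (b * t) * (1 + t ^ 2)) (Ioi 0) := by
  have hexp := integrableOn_exp_mul_Ioi hb 0
  have hsq := integrableOn_rpow_mul_exp_neg_mul_rpow (s := 2) (by norm_num) one_pos (neg_pos.2 hb)
  refine (hexp.add hsq).congr_fun (fun t _ ↦ ?_) measurableSet_Ioi
  simp only [Pi.add_apply, neg_neg, Real.rpow_one, Real.rpow_two]
  ring

theorem norm_exp_mul_smul_le {E : Type*} [SeminormedAddCommGroup E] [NormedSpace ℂ E]
    {a : ℂ} {κ t B : ℝ} {v : E} (hv : ‖v‖ ≤ B * Real.exp (κ * t) * (1 + t ^ 2)) :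
    ‖Complex.exp (a * t) • v‖ ≤ B * (Real.exp ((a.re + κ) * t) * (1 + t ^ 2)) := by
  rw [norm_smul, Complex.norm_exp, Complex.re_mul_ofReal, add_mul, Real.exp_add]
  calc Real.exp (a.re * t) * ‖v‖
      ≤ Real.exp (a.re * t) * (B * Real.exp (κ * t) * (1 + t ^ 2)) := by gcongr
    _ = B * (Real.exp (a.re * t) * Real.exp (κ * t) * (1 + t ^ 2)) := by ring

variable {E : Type*} [NormedAddCommGroup E] [NormedSpace ℂ E] {a : ℂ} {f f' : ℝ → E}

theorem integrableOn_exp_mul_smul {κ B : ℝ}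
    (hf : AEStronglyMeasurable f (volume.restrict (Ioi 0)))
    (hfB : ∀ t, 0 < t → ‖f t‖ ≤ B * Real.exp (κ * t) * (1 + t ^ 2)) (ha : a.re < -κ) :
    IntegrableOn (fun t : ℝ ↦ Complex.exp (a * t) • f t) (Ioi 0) := by
  have hexp : Continuous fun t : ℝ ↦ Complex.exp (a * t) := by fun_prop
  refine ((integrableOn_exp_mul_one_add_sq (b := a.re + κ) (by linarith)).const_mul B).mono'
    (hexp.aestronglyMeasurable.smul hf) ?_
  filter_upwards [ae_restrict_mem measurableSet_Ioi] with t ht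
  exact norm_exp_mul_smul_le (hfB t ht)

theorem integral_exp_mul_smul_deriv [CompleteSpace E]
    (hf : ∀ t ∈ Ici (0 : ℝ), HasDerivAt f (f' t) t)
    (hfi : IntegrableOn (fun t : ℝ ↦ Complex.exp (a * t) • f t) (Ioi 0))
    (hfi' : IntegrableOn (fun t : ℝ ↦ Complex.exp (a * t) • f' t) (Ioi 0)) :
    ∫ t : ℝ in Ioi 0, Complex.exp (a * t) • f' t =
      -f 0 - a • ∫ t : ℝ in Ioi 0, Complex.exp (a * t) • f t := by
  have hderiv : ∀ t ∈ Ici (0 : ℝ), HasDerivAt (fun t : ℝ ↦ Complex.exp (a * t) • f t)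
      (Complex.exp (a * t) • f' t + a • Complex.exp (a * t) • f t) t := fun t ht ↦ by
    have hexp : HasDerivAt (fun t : ℝ ↦ Complex.exp (a * t)) (Complex.exp (a * t) * a) t := by
      simpa using ((hasDerivAt_id (t : ℂ)).const_mul a).cexp.comp_ofReal
    exact (hexp.fun_smul (hf t ht)).congr_deriv (by rw [mul_comm _ a, mul_smul])
  have hsmul : IntegrableOn (fun t : ℝ ↦ a • Complex.exp (a * t) • f t) (Ioi 0) := hfi.smul a
  have hsum := hfi'.add hsmul
  have hlim := tendsto_zero_of_hasDerivAt_of_integrableOn_Ioi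
    (fun t ht ↦ hderiv t (Ioi_subset_Ici_self ht)) hsum hfi
  have hFTC := integral_Ioi_of_hasDerivAt_of_tendsto' hderiv hsum hlim
  rw [integral_add hfi' hsmul, integral_smul] at hFTC
  simpa using eq_sub_of_add_eq hFTC

end ExponentialWeight

section Kernel

/-- The time derivative `∂c/∂t` of the kernel: `sin(√λ t)/√λ` for `λ > 0`,
`sinh(√(-λ) t)/√(-λ)` for `λ < 0`, and `t` for `λ = 0`. -/
noncomputable def ckerDeriv (lam t : ℝ) : ℝ :=
  if 0 < lam then Real.sin (√lam * t) / √lam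
  else if lam < 0 then Real.sinh (√(-lam) * t) / √(-lam)
  else t

theorem cker_sq {x : ℝ} (hx : 0 < x) (t : ℝ) :
    cker (x ^ 2) t = (1 - Real.cos (x * t)) / x ^ 2 := by
  rw [cker, if_pos (by positivity), Real.sqrt_sq hx.le]

theorem cker_neg_sq {x : ℝ} (hx : 0 < x) (t : ℝ) :
    cker (-x ^ 2) t = (Real.cosh (x * t) - 1) / x ^ 2 := by
  have hx2 : 0 < x ^ 2 := by positivity
  rw [cker, if_neg (by linarith), if_pos (by linarith), neg_neg, Real.sqrt_sq hx.le, div_neg,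
    ← neg_div, neg_sub]

theorem cker_zero (t : ℝ) : cker 0 t = t ^ 2 / 2 := by
  simp [cker]

theorem ckerDeriv_sq {x : ℝ} (hx : 0 < x) (t : ℝ) :
    ckerDeriv (x ^ 2) t = Real.sin (x * t) / x := by
  rw [ckerDeriv, if_pos (by positivity), Real.sqrt_sq hx.le]

theorem ckerDeriv_neg_sq {x : ℝ} (hx : 0 < x) (t : ℝ) :
    ckerDeriv (-x ^ 2) t = Real.sinh (x * t) / x := by
  have hx2 : 0 < x ^ 2 := by positivity
  rw [ckerDeriv, if_neg (by linarith), if_pos (by linarith), neg_neg, Real.sqrt_sq hx.le]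

theorem ckerDeriv_zero (t : ℝ) : ckerDeriv 0 t = t := by
  simp [ckerDeriv]

@[simp]
theorem cker_apply_zero (lam : ℝ) : cker lam 0 = 0 := by
  simp [cker]

@[simp]
theorem ckerDeriv_apply_zero (lam : ℝ) : ckerDeriv lam 0 = 0 := by
  simp [ckerDeriv]

theorem hasDerivAt_cker (lam t : ℝ) : HasDerivAt (cker lam) (ckerDeriv lam t) t := by
  have hmul (x : ℝ) : HasDerivAt (fun t ↦ x * t) x t := by
    simpa using (hasDerivAt_id t).const_mul x
  rcases exists_sq_eq_or_eq_zero_or_eq_neg_sq lam with ⟨x, hx, rfl⟩ | rfl | ⟨x, hx, rfl⟩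
  · rw [funext (cker_sq hx), ckerDeriv_sq hx]
    refine (((hmul x).cos.const_sub 1).div_const (x ^ 2)).congr_deriv ?_
    field_simp
  · rw [funext cker_zero, ckerDeriv_zero]
    simpa using (hasDerivAt_pow 2 t).div_const 2
  · rw [funext (cker_neg_sq hx), ckerDeriv_neg_sq hx]
    refine (((hmul x).cosh.sub_const 1).div_const (x ^ 2)).congr_deriv ?_
    field_simp

theorem hasDerivAt_ckerDeriv (lam t : ℝ) :
    HasDerivAt (ckerDeriv lam) (1 - lam * cker lam t) t := by
  have hmul (x : ℝ) : HasDerivAt (fun t ↦ x * t) x t := by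
    simpa using (hasDerivAt_id t).const_mul x
  rcases exists_sq_eq_or_eq_zero_or_eq_neg_sq lam with ⟨x, hx, rfl⟩ | rfl | ⟨x, hx, rfl⟩
  · rw [funext (ckerDeriv_sq hx), cker_sq hx]
    refine ((hmul x).sin.div_const x).congr_deriv ?_
    field_simp
    ring
  · rw [funext ckerDeriv_zero]
    simpa using hasDerivAt_id' t
  · rw [funext (ckerDeriv_neg_sq hx), cker_neg_sq hx]
    refine ((hmul x).sinh.div_const x).congr_deriv ?_
    field_simp
    ring

theorem continuous_cker (lam : ℝ) : Continuous (cker lam) :=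
  continuous_iff_continuousAt.2 fun t ↦ (hasDerivAt_cker lam t).continuousAt

theorem continuous_ckerDeriv (lam : ℝ) : Continuous (ckerDeriv lam) :=
  continuous_iff_continuousAt.2 fun t ↦ (hasDerivAt_ckerDeriv lam t).continuousAt

theorem measurable_uncurry_cker : Measurable (Function.uncurry cker) := by
  refine Measurable.ite (measurableSet_lt measurable_const measurable_fst) (by fun_prop) ?_
  exact .ite (measurableSet_lt measurable_fst measurable_const) (by fun_prop) (by fun_prop)

variable {κ lam t : ℝ}

theorem abs_one_sub_mul_cker_le (hκ : 0 ≤ κ) (hlam : -κ ^ 2 ≤ lam) (ht : 0 ≤ t) :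
    |1 - lam * cker lam t| ≤ Real.exp (κ * t) := by
  have hexp : 1 ≤ Real.exp (κ * t) := Real.one_le_exp (by positivity)
  rcases exists_sq_eq_or_eq_zero_or_eq_neg_sq lam with ⟨x, hx, rfl⟩ | rfl | ⟨x, hx, rfl⟩
  · have hcos : 1 - x ^ 2 * cker (x ^ 2) t = Real.cos (x * t) := by
      rw [cker_sq hx]; field_simp; ring
    rw [hcos]
    exact (Real.abs_cos_le_one _).trans hexp
  · simpa using hexp
  · have hcosh : 1 - -x ^ 2 * cker (-x ^ 2) t = Real.cosh (x * t) := by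
      rw [cker_neg_sq hx]; field_simp; ring
    have hxκ : x ≤ κ := (sq_le_sq₀ hx.le hκ).1 (by linarith)
    have hsinh : 0 ≤ Real.sinh (x * t) := Real.sinh_nonneg_iff.2 (by positivity)
    rw [hcosh, abs_of_pos (Real.cosh_pos _)]
    calc Real.cosh (x * t) ≤ Real.exp (x * t) := by linarith [Real.cosh_add_sinh (x * t)]
      _ ≤ Real.exp (κ * t) := by gcongr

theorem abs_ckerDeriv_le (hκ : 0 ≤ κ) (hlam : -κ ^ 2 ≤ lam) (ht : 0 ≤ t) :
    |ckerDeriv lam t| ≤ Real.exp (κ * t) * t := by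
  simpa using norm_image_sub_le_of_norm_deriv_le_segment'
    (fun s _ ↦ (hasDerivAt_ckerDeriv lam s).hasDerivWithinAt)
    (fun s hs ↦ (abs_one_sub_mul_cker_le hκ hlam hs.1).trans
      (Real.exp_le_exp.2 (by gcongr; exact hs.2.le))) t (right_mem_Icc.2 ht)

theorem abs_cker_le_mul_sq (hκ : 0 ≤ κ) (hlam : -κ ^ 2 ≤ lam) (ht : 0 ≤ t) :
    |cker lam t| ≤ Real.exp (κ * t) * t ^ 2 := by
  have hderiv : ∀ s ∈ Ico 0 t, |ckerDeriv lam s| ≤ Real.exp (κ * t) * t := fun s hs ↦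
    (abs_ckerDeriv_le hκ hlam hs.1).trans (by gcongr; exacts [hs.1, hs.2.le, hs.2.le])
  simpa [pow_two, mul_assoc] using norm_image_sub_le_of_norm_deriv_le_segment'
    (fun s _ ↦ (hasDerivAt_cker lam s).hasDerivWithinAt) hderiv t (right_mem_Icc.2 ht)

theorem abs_cker_le (hκ : 0 ≤ κ) (hlam : -κ ^ 2 ≤ lam) (ht : 0 ≤ t) :
    |cker lam t| ≤ 2 * (1 / (1 + |lam|)) * Real.exp (κ * t) * (1 + t ^ 2) := by
  have hexp : 1 ≤ Real.exp (κ * t) := Real.one_le_exp (by positivity)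
  have hmul : |lam| * |cker lam t| ≤ 2 * Real.exp (κ * t) := by
    rw [← abs_mul]
    calc |lam * cker lam t| = |1 - (1 - lam * cker lam t)| := by rw [sub_sub_cancel]
      _ ≤ |1| + |1 - lam * cker lam t| := abs_sub _ _
      _ ≤ 2 * Real.exp (κ * t) := by
        rw [abs_one]; linarith [abs_one_sub_mul_cker_le hκ hlam ht]
  have hsum : |cker lam t| * (1 + |lam|) ≤ 2 * Real.exp (κ * t) * (1 + t ^ 2) := by
    nlinarith [abs_cker_le_mul_sq hκ hlam ht, mul_nonneg (zero_le_one.trans hexp) (sq_nonneg t)]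
  calc |cker lam t| ≤ 2 * Real.exp (κ * t) * (1 + t ^ 2) / (1 + |lam|) :=
        (le_div_iff₀ (by positivity)).2 hsum
    _ = 2 * (1 / (1 + |lam|)) * Real.exp (κ * t) * (1 + t ^ 2) := by ring

theorem integrableOn_exp_mul_cker (hκ : 0 ≤ κ) (hlam : -κ ^ 2 ≤ lam) {a : ℂ} (ha : a.re < -κ) :
    IntegrableOn (fun t : ℝ ↦ Complex.exp (a * t) * (cker lam t : ℂ)) (Ioi 0) :=
  integrableOn_exp_mul_smul
    (Complex.continuous_ofReal.comp (continuous_cker lam)).aestronglyMeasurable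
    (fun _ ht ↦ (Complex.norm_real _).trans_le (abs_cker_le hκ hlam ht.le)) ha

theorem integrableOn_exp_mul_ckerDeriv (hκ : 0 ≤ κ) (hlam : -κ ^ 2 ≤ lam) {a : ℂ}
    (ha : a.re < -κ) :
    IntegrableOn (fun t : ℝ ↦ Complex.exp (a * t) * (ckerDeriv lam t : ℂ)) (Ioi 0) := by
  refine integrableOn_exp_mul_smul (κ := κ) (B := 1)
    (Complex.continuous_ofReal.comp (continuous_ckerDeriv lam)).aestronglyMeasurable
    (fun t ht ↦ ?_) ha
  calc ‖(ckerDeriv lam t : ℂ)‖ ≤ Real.exp (κ * t) * t :=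
        (Complex.norm_real _).trans_le (abs_ckerDeriv_le hκ hlam ht.le)
    _ ≤ Real.exp (κ * t) * (1 + t ^ 2) := by gcongr; nlinarith
    _ = 1 * Real.exp (κ * t) * (1 + t ^ 2) := by ring

theorem integral_exp_mul_cker (hκ : 0 ≤ κ) (hlam : -κ ^ 2 ≤ lam) {a : ℂ} (ha : a.re < -κ) :
    ∫ t : ℝ in Ioi 0, Complex.exp (a * t) * (cker lam t : ℂ) = -1 / (a * (a ^ 2 + lam)) := by
  have ha₀ : a.re < 0 := by linarith
  have ha_ne : a ≠ 0 := by rintro rfl; simp at ha₀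
  have hc := integrableOn_exp_mul_cker hκ hlam ha
  have hc' := integrableOn_exp_mul_ckerDeriv hκ hlam ha
  have hexp := integrableOn_exp_mul_complex_Ioi ha₀ 0
  have hode (t : ℝ) : Complex.exp (a * t) * ((1 - lam * cker lam t : ℝ) : ℂ) =
      Complex.exp (a * t) - lam * (Complex.exp (a * t) * (cker lam t : ℂ)) := by
    push_cast; ring
  have hc'' : IntegrableOn
      (fun t : ℝ ↦ Complex.exp (a * t) * ((1 - lam * cker lam t : ℝ) : ℂ)) (Ioi 0) := by
    simp_rw [hode]
    exact hexp.sub (hc.const_mul _)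
  have hL' := integral_exp_mul_smul_deriv (fun t _ ↦ (hasDerivAt_cker lam t).ofReal_comp) hc hc'
  have hL'' := integral_exp_mul_smul_deriv
    (fun t _ ↦ (hasDerivAt_ckerDeriv lam t).ofReal_comp) hc' hc''
  simp only [smul_eq_mul, hode, cker_apply_zero, ckerDeriv_apply_zero] at hL' hL''
  rw [integral_sub hexp (hc.const_mul _), integral_const_mul, integral_exp_mul_complex_Ioi ha₀,
    hL'] at hL''
  set L := ∫ t : ℝ in Ioi 0, Complex.exp (a * t) * (cker lam t : ℂ)
  have hL : L * (a * (a ^ 2 + lam)) = -1 := by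
    simp only [Complex.ofReal_zero, mul_zero, Complex.exp_zero] at hL''
    field_simp at hL''
    linear_combination -hL''
  have hL_ne : L * (a * (a ^ 2 + lam)) ≠ 0 := hL ▸ neg_ne_zero.2 one_ne_zero
  exact eq_div_of_mul_eq (right_ne_zero_of_mul hL_ne) hL

theorem integral_exp_I_mul_cker (hκ : 0 ≤ κ) (hlam : -κ ^ 2 ≤ lam) {z : ℂ} (hz : κ < z.im) :
    ∫ t : ℝ in Ioi 0, Complex.exp (Complex.I * z * t) * (cker lam t : ℂ) =
      Complex.I / z * (1 / (lam - z ^ 2)) := by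
  have hI : -1 / (Complex.I * z) = Complex.I / z := by
    rw [← Complex.I_mul_I, mul_div_mul_left _ _ Complex.I_ne_zero]
  rw [integral_exp_mul_cker hκ hlam (by simpa using hz), ← hI, div_mul_div_comm, mul_one, mul_pow,
    Complex.I_sq]
  ring_nf

end Kernel

section TransferFunction

/-- The transfer function `Φ_τ(t) = ∫ c(λ,t) dτ(λ)`. As a Bochner integral it is `0` when
`c(·,t)` is not `τ`-integrable. -/
noncomputable def transferFn (τ : Measure ℝ) (t : ℝ) : ℝ :=
  ∫ lam : ℝ, cker lam t ∂τ

variable {κ t : ℝ} {τ : Measure ℝ} (hκ : 0 ≤ κ) (hsupp : ∀ᵐ lam ∂τ, -κ ^ 2 ≤ lam)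
  (hτ : Integrable (fun lam : ℝ ↦ 1 / (1 + |lam|)) τ)

include hκ hsupp hτ

theorem integrable_cker (ht : 0 ≤ t) : Integrable (fun lam : ℝ ↦ cker lam t) τ := by
  have hdom := ((hτ.const_mul 2).mul_const (Real.exp (κ * t))).mul_const (1 + t ^ 2)
  refine hdom.mono' measurable_uncurry_cker.of_uncurry_right.aestronglyMeasurable ?_
  filter_upwards [hsupp] with lam hlam using abs_cker_le hκ hlam ht

theorem abs_transferFn_le (ht : 0 ≤ t) :
    |transferFn τ t| ≤
      2 * (∫ lam : ℝ, 1 / (1 + |lam|) ∂τ) * Real.exp (κ * t) * (1 + t ^ 2) := by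
  have hdom := ((hτ.const_mul 2).mul_const (Real.exp (κ * t))).mul_const (1 + t ^ 2)
  rw [transferFn, ← Real.norm_eq_abs, ← integral_const_mul, ← integral_mul_const,
    ← integral_mul_const]
  refine norm_integral_le_of_norm_le hdom ?_
  filter_upwards [hsupp] with lam hlam using abs_cker_le hκ hlam ht

variable {z : ℂ} (hz : κ < z.im)

include hz

theorem integrable_exp_I_mul_cker_prod :
    Integrable (Function.uncurry fun lam t : ℝ ↦
      Complex.exp (Complex.I * z * t) * (cker lam t : ℂ)) (τ.prod (volume.restrict (Ioi 0))) := by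
  have hre : (Complex.I * z).re + κ < 0 := by simpa using hz
  have hmeas := Complex.measurable_ofReal.comp measurable_uncurry_cker
  refine ((hτ.const_mul 2).mul_prod (integrableOn_exp_mul_one_add_sq hre).integrable).mono'
    (Measurable.mul (by fun_prop) hmeas).aestronglyMeasurable ?_
  filter_upwards [Measure.quasiMeasurePreserving_fst.ae hsupp,
    Measure.quasiMeasurePreserving_snd.ae (ae_restrict_mem measurableSet_Ioi)] with p hlam ht
  exact norm_exp_mul_smul_le
    ((Complex.norm_real _).trans_le (abs_cker_le hκ hlam (mem_Ioi.1 ht).le))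

theorem integrable_one_div_sub_sq : Integrable (fun lam : ℝ ↦ 1 / ((lam : ℂ) - z ^ 2)) τ := by
  have hz_ne : z ≠ 0 := by rintro rfl; exact absurd hκ hz.not_ge
  have hI : Complex.I / z ≠ 0 := div_ne_zero Complex.I_ne_zero hz_ne
  have hL := (integrable_exp_I_mul_cker_prod hκ hsupp hτ hz).integral_prod_left.congr
    (hsupp.mono fun lam hlam ↦ integral_exp_I_mul_cker hκ hlam hz)
  simpa only [inv_mul_cancel_left₀ hI] using hL.const_mul (Complex.I / z)⁻¹

variable [SFinite τ]

theorem integrableOn_exp_I_mul_transferFn :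
    IntegrableOn (fun t : ℝ ↦ Complex.exp (Complex.I * z * t) * (transferFn τ t : ℂ))
      (Ioi 0) := by
  simpa only [IntegrableOn, Function.uncurry, integral_const_mul, integral_complex_ofReal,
    transferFn] using (integrable_exp_I_mul_cker_prod hκ hsupp hτ hz).integral_prod_right

theorem integral_exp_I_mul_transferFn :
    ∫ t : ℝ in Ioi 0, Complex.exp (Complex.I * z * t) * (transferFn τ t : ℂ) =
      Complex.I / z * ∫ lam : ℝ, 1 / ((lam : ℂ) - z ^ 2) ∂τ := by
  simp_rw [transferFn, ← integral_complex_ofReal, ← integral_const_mul]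
  rw [← integral_integral_swap (integrable_exp_I_mul_cker_prod hκ hsupp hτ hz)]
  exact integral_congr_ae (hsupp.mono fun lam hlam ↦ integral_exp_I_mul_cker hκ hlam hz)

end TransferFunction

/-- **Laplace transform of the transfer function** (relation (2.11)).
If `τ` is supported in `[-κ²,∞)` with `∫ dτ(λ)/(1+|λ|) < ∞`, then
`Φ_τ(t) = ∫_ℝ c(λ,t) dτ(λ)` is finite, of exponential growth
`|Φ_τ(t)| ≤ C e^{κt}(1+t²)`, and for `Im z > κ`:
`∫₀^∞ e^{izt} Φ_τ(t) dt = (i/z) ∫_ℝ dτ(λ)/(λ - z²)`, with absolute convergence. -/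
theorem laplace_transform_of_transferFn
    (κ : ℝ) (hκ : 0 ≤ κ)
    (τ : Measure ℝ) (hsupp : τ (Iio (-κ ^ 2)) = 0)
    (hτ : ∫⁻ lam : ℝ, ENNReal.ofReal (1 / (1 + |lam|)) ∂τ < ⊤) :
    (∀ t : ℝ, 0 ≤ t → Integrable (fun lam : ℝ => cker lam t) τ) ∧
    (∃ C : ℝ, 0 < C ∧ ∀ t : ℝ, 0 ≤ t →
      |∫ lam : ℝ, cker lam t ∂τ| ≤ C * Real.exp (κ * t) * (1 + t ^ 2)) ∧
    (∀ z : ℂ, κ < z.im →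
      IntegrableOn
        (fun t : ℝ => Complex.exp (Complex.I * z * t) * ((∫ lam : ℝ, cker lam t ∂τ : ℝ) : ℂ))
        (Ioi (0:ℝ)) ∧
      Integrable (fun lam : ℝ => 1 / ((lam : ℂ) - z ^ 2)) τ ∧
      ∫ t in Ioi (0:ℝ),
          Complex.exp (Complex.I * z * t) * ((∫ lam : ℝ, cker lam t ∂τ : ℝ) : ℂ) =
        (Complex.I / z) * ∫ lam : ℝ, 1 / ((lam : ℂ) - z ^ 2) ∂τ) := by
  have hsupp' : ∀ᵐ lam ∂τ, -κ ^ 2 ≤ lam := by simpa [ae_iff, Iio] using hsupp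
  have hpos (lam : ℝ) : 0 < 1 / (1 + |lam|) := by positivity
  have hint : Integrable (fun lam : ℝ ↦ 1 / (1 + |lam|)) τ :=
    ⟨Measurable.aestronglyMeasurable (by fun_prop),
      (hasFiniteIntegral_iff_ofReal (.of_forall fun lam ↦ (hpos lam).le)).2 hτ⟩
  have : SigmaFinite τ := sigmaFinite_of_lintegral_ne_top (by fun_prop)
    (.of_forall fun lam ↦ (ENNReal.ofReal_pos.2 (hpos lam)).ne') hτ.ne
  refine ⟨fun t ht ↦ integrable_cker hκ hsupp' hint ht,
    ⟨2 * (∫ lam : ℝ, 1 / (1 + |lam|) ∂τ) + 1, by positivity, fun t ht ↦ ?_⟩, fun z hz ↦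
    ⟨integrableOn_exp_I_mul_transferFn hκ hsupp' hint hz,
      integrable_one_div_sub_sq hκ hsupp' hint hz,
      integral_exp_I_mul_transferFn hκ hsupp' hint hz⟩⟩
  exact (abs_transferFn_le hκ hsupp' hint ht).trans (by gcongr; linarith)
end
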